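/- arXiv:2604.14462 — 4 statements merged into one kernel-verified Lean document; each statement's English description precedes it below -/
import Mathlib

section
/- Let u_{m,n} denote the cardinality of NC(U_{m,n}). For all m ≥ 2 and n ≥ 1, u_{m,n} = 2·u_{m−1,n} + Σ_{k=1}^{n} u_{m−1,k−1}·2^{n−k}. -/
open Finset

/-- A finpartition of a finite set of points in the plane is *noncrossing* if the
convex hulls (over `ℝ`) of its blocks are pairwise disjoint. -/
def IsNoncrossing {P : Finset ℂ} (π : Finpartition P) : Prop :=
  (π.parts : Set (Finset ℂ)).Pairwise fun B₁ B₂ =>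
    Disjoint (convexHull ℝ (B₁ : Set ℂ)) (convexHull ℝ (B₂ : Set ℂ))

/-- The poset `NC(P)` of noncrossing partitions of `P`, ordered by refinement:
`π ≤ μ` iff every block of `μ` is a union of blocks of `π`. -/
abbrev NC (P : Finset ℂ) : Type := {π : Finpartition P // IsNoncrossing π}

/-- The blocks of a noncrossing partition. -/
def NC.parts {P : Finset ℂ} (π : NC P) : Finset (Finset ℂ) := π.1.parts

/-- Two points lie in a common block of a noncrossing partition. -/
def NC.SameBlock {P : Finset ℂ} (π : NC P) (a b : ℂ) : Prop :=
  ∃ B ∈ π.parts, a ∈ B ∧ b ∈ B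

/-- The open cone configuration `U_{m,n} = {1, …, m} ∪ {i, 2i, …, ni} ⊆ ℂ`. -/
noncomputable def Uconfig (m n : ℕ) : Finset ℂ :=
  ((Finset.Icc 1 m).image fun j : ℕ => (j : ℂ)) ∪
    ((Finset.Icc 1 n).image fun k : ℕ => (k : ℂ) * Complex.I)


abbrev Pt := ℕ ⊕ ℕ

def InV (m n : ℕ) : Pt → Prop
  | .inl i => i < m
  | .inr j => j < n

/-- Combinatorial model of noncrossing partitions: equivalence relations on two rays. -/
structure Good (r : Pt → Pt → Prop) : Prop where
  refl : ∀ a, r a a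
  symm : ∀ a b, r a b → r b a
  trans : ∀ a b c, r a b → r b c → r a c
  cx : ∀ i j k, i < j → j < k → r (.inl i) (.inl k) → r (.inl i) (.inl j)
  cy : ∀ i j k, i < j → j < k → r (.inr i) (.inr k) → r (.inr i) (.inr j)
  cc : ∀ i i' j j', i < i' → j < j' → r (.inl i) (.inr j') → r (.inl i') (.inr j) →
    r (.inl i) (.inl i')

def SS (m n : ℕ) : Set (Pt → Pt → Prop) :=
  {r | Good r ∧ ∀ a b, r a b → a ≠ b → InV m n a}

def DD (m n : ℕ) : Set (Pt → Pt → Prop) :=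
  {r | r ∈ SS (m + 1) n ∧ (∃ j, r (.inl m) (.inr j)) ∧ ∀ i, i < m → ¬ r (.inl m) (.inl i)}

def Jn (p q : Pt) (r : Pt → Pt → Prop) : Pt → Pt → Prop :=
  fun a b => r (if a = p then q else a) (if b = p then q else b)

def Is (p : Pt) (r : Pt → Pt → Prop) : Pt → Pt → Prop :=
  fun a b => a = b ∨ (a ≠ p ∧ b ≠ p ∧ r a b)

theorem Is_Jn {p q r} (hr : Good r) (hp : ∀ b, r p b → p = b) (hpq : p ≠ q) :
    Is p (Jn p q r) = r := by
  funext a b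
  have := hr.refl
  have := hr.symm
  simp only [Is, Jn, eq_iff_iff]
  grind

theorem Jn_Is {p q r} (hr : Good r) (hpq : p ≠ q) (h : r p q) :
    Jn p q (Is p r) = r := by
  funext a b
  have := hr.refl
  have := hr.symm
  have := hr.trans
  simp only [Is, Jn, eq_iff_iff]
  grind

theorem Is_mem_x {m n r} (h : r ∈ SS (m+1) n) : Is (.inl m) r ∈ SS m n := by
  obtain ⟨⟨h1,h2,h3,h4,h5,h6⟩, h7⟩ := h
  refine ⟨⟨?_, ?_, ?_, ?_, ?_, ?_⟩, ?_⟩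
  · grind [Is]
  · grind [Is]
  · grind [Is]
  · intro i j k hi hj
    have := h7 (.inl k) (.inl i)
    simp only [Is, InV] at *
    grind
  · grind [Is]
  · grind [Is]
  · rintro (a|a) b <;> simp only [Is, InV] at * 
    · have := h7 (.inl a) b
      simp only [InV] at *
      grind
    · have := h7 (.inr a) b
      simp only [InV] at *
      grind

theorem Is_mem_y {m n r} (h : r ∈ SS m (n+1)) : Is (.inr n) r ∈ SS m n := by
  obtain ⟨⟨h1,h2,h3,h4,h5,h6⟩, h7⟩ := h
  refine ⟨⟨?_, ?_, ?_, ?_, ?_, ?_⟩, ?_⟩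
  · grind [Is]
  · grind [Is]
  · grind [Is]
  · grind [Is]
  · intro i j k hi hj
    have := h7 (.inr k) (.inr i)
    simp only [Is, InV] at *
    grind
  · grind [Is]
  · rintro (a|a) b <;> simp only [Is, InV] at * 
    · have := h7 (.inl a) b
      simp only [InV] at *
      grind
    · have := h7 (.inr a) b
      simp only [InV] at *
      grind

theorem Jn_mem_x {m n r} (h : r ∈ SS (m+1) n) :
    Jn (.inl (m+1)) (.inl m) r ∈ SS (m+2) n := by
  obtain ⟨⟨h1,h2,h3,h4,h5,h6⟩, h7⟩ := h
  have hx : ∀ a b, r (.inl a) b → .inl a ≠ b → a < m + 1 := fun a b => h7 (.inl a) b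
  have hy : ∀ a b, r (.inr a) b → .inr a ≠ b → a < n := fun a b => h7 (.inr a) b
  clear h7
  refine ⟨⟨?_, ?_, ?_, ?_, ?_, ?_⟩, ?_⟩
  · grind [Jn]
  · grind [Jn]
  · grind [Jn]
  · intro i j k hij hjk h
    have a1 := h4 i j k hij hjk
    have a2 := h4 i j m hij
    have a3 := hx k (.inl i)
    have a4 := hx k (.inl m)
    have a5 := h2 (.inl i) (.inl k)
    have a6 := h2 (.inl m) (.inl k)
    have a7 := h1 (.inl m)
    clear h1 h2 h3 h4 h5 h6 hx hy
    simp only [Jn, Sum.inl.injEq, ne_eq] at *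
    grind
  · intro i j k hij hjk h
    exact h5 i j k hij hjk h
  · intro i i' j j' hi hj h h'
    have a1 := h6 i i' j j' hi hj
    have a2 := h6 i m j j'
    have a3 := hx i' (.inr j)
    have a7 := h1 (.inl m)
    clear h1 h2 h3 h4 h5 h6 hx hy
    simp only [Jn, Sum.inl.injEq, ne_eq, reduceCtorEq, if_false] at *
    grind
  · rintro (a|a) b h hab
    · have a1 := hx a b
      have a2 := hx a (.inl m)
      simp only [Jn, InV, Sum.inl.injEq, ne_eq] at *
      clear h1 h2 h3 h4 h5 h6 hx hy
      grind
    · have a1 := hy a b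
      have a2 := hy a (.inl m)
      simp only [Jn, InV, ne_eq, reduceCtorEq, if_false] at *
      clear h1 h2 h3 h4 h5 h6 hx hy
      grind

theorem Jn_mem_y {m n r} (h : r ∈ SS m (n+1)) :
    Jn (.inr (n+1)) (.inr n) r ∈ SS m (n+2) := by
  obtain ⟨⟨h1,h2,h3,h4,h5,h6⟩, h7⟩ := h
  have hx : ∀ a b, r (.inl a) b → .inl a ≠ b → a < m := fun a b => h7 (.inl a) b
  have hy : ∀ a b, r (.inr a) b → .inr a ≠ b → a < n + 1 := fun a b => h7 (.inr a) b
  clear h7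
  refine ⟨⟨?_, ?_, ?_, ?_, ?_, ?_⟩, ?_⟩
  · grind [Jn]
  · grind [Jn]
  · grind [Jn]
  · intro i j k hij hjk h
    exact h4 i j k hij hjk h
  · intro i j k hij hjk h
    have a1 := h5 i j k hij hjk
    have a2 := h5 i j n hij
    have a3 := hy k (.inr i)
    have a4 := hy k (.inr n)
    have a5 := h2 (.inr i) (.inr k)
    have a6 := h2 (.inr n) (.inr k)
    have a7 := h1 (.inr n)
    clear h1 h2 h3 h4 h5 h6 hx hy
    simp only [Jn, Sum.inr.injEq, ne_eq] at *
    grind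
  · intro i i' j j' hi hj h h'
    have a1 := h6 i i' j j' hi hj
    have a2 := h6 i i' j n hi
    have a3 := hy j' (.inl i)
    have a4 := h2 (.inl i) (.inr j')
    have a7 := h3 (.inl i) (.inr n) (.inl i')
    have a8 := h2 (.inl i') (.inr n)
    clear h1 h2 h3 h4 h5 h6 hx hy
    simp only [Jn, Sum.inr.injEq, ne_eq, reduceCtorEq, if_false] at *
    grind
  · rintro (a|a) b h hab
    · have a1 := hx a b
      have a2 := hx a (.inr n)
      simp only [Jn, InV, ne_eq, reduceCtorEq, if_false] at *
      clear h1 h2 h3 h4 h5 h6 hx hy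
      grind
    · have a1 := hy a b
      have a2 := hy a (.inr n)
      simp only [Jn, InV, Sum.inr.injEq, ne_eq] at *
      clear h1 h2 h3 h4 h5 h6 hx hy
      grind

theorem Jn_mem_xy {m n r} (h : r ∈ SS m n) :
    Jn (.inr n) (.inl m) r ∈ SS (m+1) (n+1) := by
  obtain ⟨⟨h1,h2,h3,h4,h5,h6⟩, h7⟩ := h
  have hx : ∀ a b, r (.inl a) b → .inl a ≠ b → a < m := fun a b => h7 (.inl a) b
  have hy : ∀ a b, r (.inr a) b → .inr a ≠ b → a < n := fun a b => h7 (.inr a) b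
  clear h7
  refine ⟨⟨?_, ?_, ?_, ?_, ?_, ?_⟩, ?_⟩
  · grind [Jn]
  · grind [Jn]
  · grind [Jn]
  · intro i j k hij hjk h
    exact h4 i j k hij hjk h
  · intro i j k hij hjk h
    have a1 := h5 i j k hij hjk
    have a2 := hx m (.inr i)
    have a3 := hx m (.inr k)
    have a4 := hy k (.inr i)
    have a5 := h2 (.inr i) (.inr k)
    have a6 := h2 (.inr i) (.inl m)
    clear h1 h2 h3 h4 h5 h6 hx hy
    simp only [Jn, Sum.inr.injEq, ne_eq, reduceCtorEq] at *
    grind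
  · intro i i' j j' hi hj h h'
    have a1 := h6 i i' j j' hi hj
    have a2 := hx m (.inl i)
    have a3 := hx m (.inl i')
    have a4 := h2 (.inl i) (.inl m)
    have a5 := h2 (.inl i') (.inl m)
    have a6 := hy j' (.inl i)
    have a7 := h2 (.inl i) (.inr j')
    have a8 := hx i' (.inr j)
    have a9 := hx i' (.inl m)
    clear h1 h2 h3 h4 h5 h6 hx hy
    simp only [Jn, Sum.inl.injEq, Sum.inr.injEq, ne_eq, reduceCtorEq, if_false] at *
    grind
  · rintro (a|a) b h hab
    · have a1 := hx a b
      have a2 := hx a (.inl m)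
      simp only [Jn, InV, ne_eq, reduceCtorEq, Sum.inl.injEq, if_false] at *
      clear h1 h2 h3 h4 h5 h6 hx hy
      grind
    · have a1 := hy a b
      have a2 := hy a (.inl m)
      simp only [Jn, InV, Sum.inr.injEq, ne_eq] at *
      clear h1 h2 h3 h4 h5 h6 hx hy
      grind

theorem SS_mono_x {m n r} (h : r ∈ SS m n) : r ∈ SS (m+1) n := by
  refine ⟨h.1, ?_⟩
  rintro (a|a) b hab hne
  · have := h.2 _ _ hab hne
    simp only [InV] at *
    omega
  · exact h.2 _ _ hab hne

theorem SS_mono_y {m n r} (h : r ∈ SS m n) : r ∈ SS m (n+1) := by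
  refine ⟨h.1, ?_⟩
  rintro (a|a) b hab hne
  · exact h.2 _ _ hab hne
  · have := h.2 _ _ hab hne
    simp only [InV] at *
    omega

theorem SS_iso_x {m n r} (h : r ∈ SS m n) : ∀ b, r (.inl m) b → .inl m = b := by
  intro b hb
  by_contra hne
  have := h.2 _ _ hb hne
  simp [InV] at this

theorem SS_iso_y {m n r} (h : r ∈ SS m n) : ∀ b, r (.inr n) b → .inr n = b := by
  intro b hb
  by_contra hne
  have := h.2 _ _ hb hne
  simp [InV] at this

theorem SS_of_iso_x {m n r} (h : r ∈ SS (m+1) n) (hi : ∀ b, r (.inl m) b → .inl m = b) :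
    r ∈ SS m n := by
  refine ⟨h.1, ?_⟩
  rintro (a|a) b hab hne
  · have := h.2 _ _ hab hne
    simp only [InV] at *
    rcases Nat.lt_succ_iff_lt_or_eq.1 this with h | rfl
    · exact h
    · exact absurd (hi _ hab) hne
  · exact h.2 _ _ hab hne

theorem SS_of_iso_y {m n r} (h : r ∈ SS m (n+1)) (hi : ∀ b, r (.inr n) b → .inr n = b) :
    r ∈ SS m n := by
  refine ⟨h.1, ?_⟩
  rintro (a|a) b hab hne
  · exact h.2 _ _ hab hne
  · have := h.2 _ _ hab hne
    simp only [InV] at *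
    rcases Nat.lt_succ_iff_lt_or_eq.1 this with h | rfl
    · exact h
    · exact absurd (hi _ hab) hne

theorem ncard_eq_of_inv {α : Type*} {S T : Set α} (f g : α → α) (hf : ∀ r ∈ S, f r ∈ T)
    (hg : ∀ r ∈ T, g r ∈ S) (gf : ∀ r ∈ S, g (f r) = r) (fg : ∀ r ∈ T, f (g r) = r) :
    S.ncard = T.ncard := by
  have : f '' S = T := by
    ext r
    exact ⟨by rintro ⟨s, hs, rfl⟩; exact hf s hs, fun hr => ⟨g r, hg r hr, fg r hr⟩⟩
  rw [← this, Set.ncard_image_of_injOn]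
  intro a ha b hb hab
  rw [← gf a ha, ← gf b hb, hab]

theorem rec_x (hfin : ∀ m n, (SS m n).Finite) (m n : ℕ) :
    (SS (m+2) n).ncard = 2 * (SS (m+1) n).ncard + (DD (m+1) n).ncard := by
  have key : SS (m+2) n = {r | r ∈ SS (m+2) n ∧ r (.inl (m+1)) (.inl m)} ∪
      (SS (m+1) n ∪ DD (m+1) n) := by
    ext r
    constructor
    · intro h
      by_cases hq : r (.inl (m+1)) (.inl m)
      · exact Or.inl ⟨h, hq⟩
      · right
        by_cases hi : ∀ b, r (.inl (m+1)) b → .inl (m+1) = b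
        · exact Or.inl (SS_of_iso_x h hi)
        · right
          push Not at hi
          obtain ⟨b, hb, hne⟩ := hi
          have hlow : ∀ i, i < m+1 → ¬ r (.inl (m+1)) (.inl i) := by
            intro i hi hr
            rcases Nat.lt_succ_iff_lt_or_eq.1 hi with hi | rfl
            · have h1 := h.1.symm _ _ hr
              have h2 := h.1.cx i m (m+1) hi (by omega) h1
              exact hq (h.1.trans _ _ _ hr h2)
            · exact hq hr
          refine ⟨h, ?_, hlow⟩
          rcases b with i | j
          · have h1 := h.2 _ _ (h.1.symm _ _ hb) hne.symm
            simp only [InV] at h1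
            have h2 : i ≠ m + 1 := fun e => hne (by rw [e])
            exact absurd hb (hlow i (by omega))
          · exact ⟨j, hb⟩
    · rintro (h | h | h)
      · exact h.1
      · exact SS_mono_x h
      · exact h.1
  have f1 : {r | r ∈ SS (m+2) n ∧ r (.inl (m+1)) (.inl m)}.Finite :=
    (hfin (m+2) n).subset fun r h => h.1
  have f2 : (DD (m+1) n).Finite := (hfin (m+2) n).subset fun r h => h.1
  have c1 : (SS (m+1) n).ncard =
      {r | r ∈ SS (m+2) n ∧ r (.inl (m+1)) (.inl m)}.ncard := by
    refine ncard_eq_of_inv (Jn (.inl (m+1)) (.inl m)) (Is (.inl (m+1))) ?_ ?_ ?_ ?_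
    · intro r h
      refine ⟨Jn_mem_x h, ?_⟩
      simp [Jn, h.1.refl]
    · intro r h
      exact Is_mem_x h.1
    · intro r h
      exact Is_Jn h.1 (SS_iso_x h) (by simp)
    · intro r h
      exact Jn_Is h.1.1 (by simp) h.2
  rw [key, Set.ncard_union_eq _ f1 ((hfin _ _).union f2), Set.ncard_union_eq _ (hfin _ _) f2, ← c1]
  · ring
  · rw [Set.disjoint_left]
    rintro r h ⟨_, ⟨j, hj⟩, _⟩
    have := SS_iso_x h _ hj
    simp at this
  · rw [Set.disjoint_left]
    rintro r ⟨_, h⟩ (h' | h')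
    · have := SS_iso_x h' _ h
      simp at this
    · exact h'.2.2 m (by omega) h

theorem DD_zero (m : ℕ) : DD m 0 = ∅ := by
  ext r
  simp only [Set.mem_empty_iff_false, iff_false]
  rintro ⟨h, ⟨j, hj⟩, _⟩
  have := h.2 _ _ (h.1.symm _ _ hj) (by simp)
  simp [InV] at this

theorem rec_y (hfin : ∀ m n, (SS m n).Finite) (m n : ℕ) :
    (DD m (n+1)).ncard = 2 * (DD m n).ncard + (SS m n).ncard := by
  set A := {r | r ∈ DD m (n+1) ∧ ∃ j, j < n ∧ r (.inr n) (.inr j)} with hA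
  set C := {r | r ∈ DD m (n+1) ∧ (∀ j, j < n → ¬ r (.inr n) (.inr j)) ∧
    r (.inr n) (.inl m)} with hC
  have key : DD m (n+1) = A ∪ (DD m n ∪ C) := by
    ext r
    constructor
    · intro h
      by_cases h1 : ∃ j, j < n ∧ r (.inr n) (.inr j)
      · exact Or.inl ⟨h, h1⟩
      right
      push Not at h1
      by_cases h2 : r (.inr n) (.inl m)
      · exact Or.inr ⟨h, h1, h2⟩
      left
      have hg := h.1.1
      refine ⟨SS_of_iso_y h.1 ?_, h.2⟩
      intro b hb
      by_contra hne
      have h3 := h.1.2 _ _ (hg.symm _ _ hb) (Ne.symm hne)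
      rcases b with i | j
      · simp only [InV] at h3
        obtain ⟨j, hj⟩ := h.2.1
        have h4 := h.1.2 _ _ (hg.symm _ _ hj) (by simp)
        simp only [InV] at h4
        have h5 : j ≠ n := by
          rintro rfl
          exact h2 (hg.symm _ _ hj)
        have h6 : i ≠ m := by
          rintro rfl
          exact h2 hb
        have h7 := hg.cc i m j n (by omega) (by omega) (hg.symm _ _ hb) hj
        exact h.2.2 i (by omega) (hg.symm _ _ h7)
      · simp only [InV] at h3
        have h2 : j ≠ n := fun e => hne (by rw [e])
        exact h1 j (by omega) hb
    · rintro (h | h | h)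
      · exact h.1
      · exact ⟨SS_mono_y h.1, h.2⟩
      · exact h.1
  have fD : ∀ n, (DD m n).Finite := fun n => (hfin (m+1) n).subset fun r h => h.1
  have fA : A.Finite := (fD (n+1)).subset fun r h => h.1
  have fC : C.Finite := (fD (n+1)).subset fun r h => h.1
  have cA : (DD m n).ncard = A.ncard := by
    rcases n with _ | n
    · have : A = ∅ := by
        ext r
        simp [hA]
      rw [this, DD_zero]
    · refine ncard_eq_of_inv (Jn (.inr (n+1)) (.inr n)) (Is (.inr (n+1))) ?_ ?_ ?_ ?_
      · intro r h
        refine ⟨⟨Jn_mem_y h.1, ?_, ?_⟩, n, by omega, ?_⟩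
        · obtain ⟨j, hj⟩ := h.2.1
          refine ⟨j, ?_⟩
          have h4 := h.1.2 _ _ (h.1.1.symm _ _ hj) (by simp)
          simp only [InV] at h4
          have : j ≠ n + 1 := by omega
          simpa [Jn, this] using hj
        · intro i hi
          simpa [Jn] using h.2.2 i hi
        · simp [Jn, h.1.1.refl]
      · rintro r ⟨h, j, hj, hr⟩
        have hg := h.1.1
        refine ⟨Is_mem_y h.1, ?_, ?_⟩
        · obtain ⟨k, hk⟩ := h.2.1
          by_cases hkn : k = n + 1
          · subst hkn
            refine ⟨j, ?_⟩
            have : j ≠ n + 1 := by omega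
            simpa [Is, this] using hg.trans _ _ _ hk hr
          · exact ⟨k, by simpa [Is, hkn] using hk⟩
        · intro i hi
          have : m ≠ i := by omega
          simpa [Is, this] using h.2.2 i hi
      · intro r h
        exact Is_Jn h.1.1 (SS_iso_y h.1) (by simp)
      · rintro r ⟨h, j, hj, hr⟩
        have hg := h.1.1
        refine Jn_Is hg (by simp) ?_
        rcases Nat.lt_succ_iff_lt_or_eq.1 hj with hj | rfl
        · have h1 := hg.cy j n (n+1) hj (by omega) (hg.symm _ _ hr)
          exact hg.trans _ _ _ hr h1
        · exact hr
  have cC : (SS m n).ncard = C.ncard := by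
    refine ncard_eq_of_inv (Jn (.inr n) (.inl m)) (Is (.inr n)) ?_ ?_ ?_ ?_
    · intro r h
      refine ⟨⟨Jn_mem_xy h, ⟨n, ?_⟩, ?_⟩, ?_, ?_⟩
      · simp [Jn, h.1.refl]
      · intro i hi hr
        have := SS_iso_x h (.inl i) (by simpa [Jn] using hr)
        simp at this
        omega
      · intro j hj hr
        have hne : j ≠ n := by omega
        have := SS_iso_x h (.inr j) (by simpa [Jn, hne] using hr)
        simp at this
      · simp [Jn, h.1.refl]
    · rintro r ⟨h, h1, h2⟩
      have hg := h.1.1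
      refine SS_of_iso_x (Is_mem_y h.1) ?_
      rintro b (hb | ⟨_, hb, hr⟩)
      · exact hb
      · by_contra hne
        have h3 := h.1.2 _ _ (hg.symm _ _ hr) (Ne.symm hne)
        rcases b with i | j
        · simp only [InV] at h3
          have h5 : i ≠ m := fun e => hne (by rw [e])
          exact h.2.2 i (by omega) hr
        · simp only [InV] at h3
          have h5 : j ≠ n := fun e => hb (by rw [e])
          exact h1 j (by omega) (hg.trans _ _ _ h2 hr)
    · intro r h
      exact Is_Jn h.1 (SS_iso_y h) (by simp)
    · rintro r ⟨h, h1, h2⟩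
      exact Jn_Is h.1.1 (by simp) h2
  have d1 : Disjoint (DD m n) C := by
    rw [Set.disjoint_left]
    rintro r h ⟨_, _, h2⟩
    have := SS_iso_y h.1 _ h2
    simp at this
  have d2 : Disjoint A (DD m n ∪ C) := by
    rw [Set.disjoint_left]
    rintro r ⟨_, j, hj, hr⟩ (h | ⟨_, h, _⟩)
    · have := SS_iso_y h.1 _ hr
      simp at this
      omega
    · exact h j hj hr
  rw [key, Set.ncard_union_eq d2 fA ((fD n).union fC), Set.ncard_union_eq d1 (fD n) fC, ← cA, ← cC]
  ring

theorem DD_card (hfin : ∀ m n, (SS m n).Finite) (m n : ℕ) :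
    (DD m n).ncard = ∑ k ∈ Finset.Icc 1 n, (SS m (k-1)).ncard * 2 ^ (n-k) := by
  induction n with
  | zero => simp [DD_zero]
  | succ n ih =>
    rw [rec_y hfin, ih, Finset.sum_Icc_succ_top (by omega), Finset.mul_sum]
    congr 1
    · apply Finset.sum_congr rfl
      intro k hk
      rw [Finset.mem_Icc] at hk
      rw [show n + 1 - k = (n - k) + 1 by omega, pow_succ]
      ring
    · simp

noncomputable def ptC : Pt → ℂ
  | .inl i => ((i + 1 : ℕ) : ℂ)
  | .inr j => ((j + 1 : ℕ) : ℂ) * Complex.I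

theorem ptC_inl_re (i : ℕ) : (ptC (.inl i)).re = (i : ℝ) + 1 := by simp [ptC]
theorem ptC_inl_im (i : ℕ) : (ptC (.inl i)).im = 0 := by simp [ptC]
theorem ptC_inr_re (i : ℕ) : (ptC (.inr i)).re = 0 := by simp [ptC]
theorem ptC_inr_im (i : ℕ) : (ptC (.inr i)).im = (i : ℝ) + 1 := by simp [ptC]

theorem ptC_inj : Function.Injective ptC := by
  have pos : ∀ i : ℕ, (i : ℝ) + 1 ≠ 0 := fun i => by positivity
  rintro (a | a) (b | b) h
  · have := congrArg Complex.re h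
    simp only [ptC_inl_re] at this
    have : a = b := by exact_mod_cast add_right_cancel this
    rw [this]
  · have := congrArg Complex.re h
    simp only [ptC_inl_re, ptC_inr_re] at this
    exact absurd this (pos _)
  · have := congrArg Complex.re h
    simp only [ptC_inl_re, ptC_inr_re] at this
    exact absurd this.symm (pos _)
  · have := congrArg Complex.im h
    simp only [ptC_inr_im] at this
    have : a = b := by exact_mod_cast add_right_cancel this
    rw [this]

theorem mem_U {m n : ℕ} {z : ℂ} : z ∈ Uconfig m n ↔ ∃ a, InV m n a ∧ ptC a = z := by
  simp only [Uconfig, Finset.mem_union, Finset.mem_image, Finset.mem_Icc]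
  constructor
  · rintro (⟨j, hj, rfl⟩ | ⟨j, hj, rfl⟩)
    · refine ⟨.inl (j-1), by simp only [InV]; omega, ?_⟩
      simp only [ptC]
      rw [Nat.sub_add_cancel hj.1]
    · refine ⟨.inr (j-1), by simp only [InV]; omega, ?_⟩
      simp only [ptC]
      rw [Nat.sub_add_cancel hj.1]
  · rintro ⟨a | a, ha, rfl⟩
    · exact Or.inl ⟨a+1, by simp only [InV] at ha; omega, rfl⟩
    · exact Or.inr ⟨a+1, by simp only [InV] at ha; omega, rfl⟩

theorem ptC_mem_U {m n : ℕ} {a : Pt} : ptC a ∈ Uconfig m n ↔ InV m n a := by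
  rw [mem_U]
  exact ⟨by rintro ⟨b, hb, h⟩; rwa [← ptC_inj h], fun h => ⟨a, h, rfl⟩⟩

def relOf {P : Finset ℂ} (π : Finpartition P) : Pt → Pt → Prop :=
  fun a b => a = b ∨ ∃ B ∈ π.parts, ptC a ∈ B ∧ ptC b ∈ B

/-- point between two points on the x axis -/
theorem seg_x {i j k : ℕ} (hij : i < j) (hjk : j < k) :
    ptC (.inl j) ∈ segment ℝ (ptC (.inl i)) (ptC (.inl k)) := by
  have h1 : (i : ℝ) < j := by exact_mod_cast hij
  have h2 : (j : ℝ) < k := by exact_mod_cast hjk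
  have h3 : (0 : ℝ) < k - i := by linarith
  refine ⟨(k - j) / (k - i), (j - i) / (k - i), by apply div_nonneg <;> linarith,
    by apply div_nonneg <;> linarith, by field_simp; ring, ?_⟩
  apply Complex.ext
  · simp only [Complex.add_re, Complex.real_smul, Complex.re_ofReal_mul, ptC_inl_re]
    field_simp
    ring
  · simp only [Complex.add_im, Complex.real_smul, Complex.im_ofReal_mul, ptC_inl_im]
    simp

theorem seg_y {i j k : ℕ} (hij : i < j) (hjk : j < k) :
    ptC (.inr j) ∈ segment ℝ (ptC (.inr i)) (ptC (.inr k)) := by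
  have h1 : (i : ℝ) < j := by exact_mod_cast hij
  have h2 : (j : ℝ) < k := by exact_mod_cast hjk
  have h3 : (0 : ℝ) < k - i := by linarith
  refine ⟨(k - j) / (k - i), (j - i) / (k - i), by apply div_nonneg <;> linarith,
    by apply div_nonneg <;> linarith, by field_simp; ring, ?_⟩
  apply Complex.ext
  · simp only [Complex.add_re, Complex.real_smul, Complex.re_ofReal_mul, ptC_inr_re]
    simp
  · simp only [Complex.add_im, Complex.real_smul, Complex.im_ofReal_mul, ptC_inr_im]
    field_simp
    ring

theorem seg_cross {i i' j j' : ℕ} (hi : i < i') (hj : j < j') :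
    ∃ z, z ∈ segment ℝ (ptC (.inl i)) (ptC (.inr j')) ∧
      z ∈ segment ℝ (ptC (.inl i')) (ptC (.inr j)) := by
  obtain ⟨a, ha, ha0⟩ : ∃ a : ℝ, a = i + 1 ∧ 0 < a := ⟨_, rfl, by positivity⟩
  obtain ⟨a', ha', _⟩ : ∃ a : ℝ, a = i' + 1 ∧ 0 < a := ⟨_, rfl, by positivity⟩
  obtain ⟨b, hb, hb0⟩ : ∃ a : ℝ, a = j + 1 ∧ 0 < a := ⟨_, rfl, by positivity⟩
  obtain ⟨b', hb', _⟩ : ∃ a : ℝ, a = j' + 1 ∧ 0 < a := ⟨_, rfl, by positivity⟩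
  have haa : a < a' := by rw [ha, ha']; exact_mod_cast Nat.succ_lt_succ hi
  have hbb : b < b' := by rw [hb, hb']; exact_mod_cast Nat.succ_lt_succ hj
  have hD : 0 < a' * b' - a * b := by nlinarith
  have hD' : a' * b' - a * b ≠ 0 := hD.ne'
  have s1 : 0 ≤ a' - a := by linarith
  have s2 : 0 ≤ b' - b := by linarith
  -- x = a a' (b'-b)/D, y = b b' (a'-a)/D
  refine ⟨⟨a * a' * (b' - b) / (a' * b' - a * b), b * b' * (a' - a) / (a' * b' - a * b)⟩,
    ⟨a' * (b' - b) / (a' * b' - a * b), b * (a' - a) / (a' * b' - a * b), by positivity,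
      by positivity, by rw [← add_div, div_eq_one_iff_eq hD']; ring, ?_⟩,
    ⟨a * (b' - b) / (a' * b' - a * b), b' * (a' - a) / (a' * b' - a * b), by positivity,
      by positivity, by rw [← add_div, div_eq_one_iff_eq hD']; ring, ?_⟩⟩
  all_goals
    apply Complex.ext
    · simp only [Complex.add_re, Complex.real_smul, Complex.re_ofReal_mul, ptC_inl_re, ptC_inr_re,
        ← ha, ← ha']
      ring
    · simp only [Complex.add_im, Complex.real_smul, Complex.im_ofReal_mul, ptC_inl_im, ptC_inr_im,
        ← hb, ← hb']
      ring

theorem NC_same {P : Finset ℂ} {π : Finpartition P} (hπ : IsNoncrossing π) {B B' : Finset ℂ}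
    (hB : B ∈ π.parts) (hB' : B' ∈ π.parts) {a b c d z : ℂ} (ha : a ∈ B) (hb : b ∈ B)
    (hc : c ∈ B') (hd : d ∈ B') (h : z ∈ segment ℝ a b) (h' : z ∈ segment ℝ c d) : B = B' := by
  by_contra hne
  refine (Set.disjoint_left.1 (hπ hB hB' hne) : _) (?_ : z ∈ _) ?_
  · exact segment_subset_convexHull (by exact_mod_cast ha) (by exact_mod_cast hb) h
  · exact segment_subset_convexHull (by exact_mod_cast hc) (by exact_mod_cast hd) h'

theorem relOf_mem {m n : ℕ} {π : Finpartition (Uconfig m n)} (hπ : IsNoncrossing π) :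
    relOf π ∈ SS m n := by
  refine ⟨⟨?_, ?_, ?_, ?_, ?_, ?_⟩, ?_⟩
  · exact fun a => Or.inl rfl
  · rintro a b (rfl | ⟨B, hB, h1, h2⟩)
    · exact Or.inl rfl
    · exact Or.inr ⟨B, hB, h2, h1⟩
  · rintro a b c (rfl | ⟨B, hB, h1, h2⟩) (rfl | ⟨B', hB', h1', h2'⟩)
    · exact Or.inl rfl
    · exact Or.inr ⟨B', hB', h1', h2'⟩
    · exact Or.inr ⟨B, hB, h1, h2⟩
    · have := π.eq_of_mem_parts hB hB' h2 h1'
      subst this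
      exact Or.inr ⟨B, hB, h1, h2'⟩
  · rintro i j k hij hjk (h | ⟨B, hB, h1, h2⟩)
    · simp at h
      omega
    · have hk : InV m n (.inl k) := ptC_mem_U.1 (π.le hB h2)
      have hj : ptC (.inl j) ∈ Uconfig m n := by
        rw [ptC_mem_U]
        simp only [InV] at *
        omega
      obtain ⟨B', hB', h3⟩ := π.exists_mem hj
      have := NC_same hπ hB hB' h1 h2 h3 h3 (seg_x hij hjk) (by simp)
      subst this
      exact Or.inr ⟨B, hB, h1, h3⟩
  · rintro i j k hij hjk (h | ⟨B, hB, h1, h2⟩)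
    · simp at h
      omega
    · have hk : InV m n (.inr k) := ptC_mem_U.1 (π.le hB h2)
      have hj : ptC (.inr j) ∈ Uconfig m n := by
        rw [ptC_mem_U]
        simp only [InV] at *
        omega
      obtain ⟨B', hB', h3⟩ := π.exists_mem hj
      have := NC_same hπ hB hB' h1 h2 h3 h3 (seg_y hij hjk) (by simp)
      subst this
      exact Or.inr ⟨B, hB, h1, h3⟩
  · rintro i i' j j' hi hj (h | ⟨B, hB, h1, h2⟩) (h' | ⟨B', hB', h1', h2'⟩)
    · simp at h
    · simp at h
    · simp at h'
    · obtain ⟨z, hz, hz'⟩ := seg_cross hi hj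
      have := NC_same hπ hB hB' h1 h2 h1' h2' hz hz'
      subst this
      exact Or.inr ⟨B, hB, h1, h1'⟩
  · rintro a b (h | ⟨B, hB, h1, h2⟩) hne
    · exact absurd h hne
    · exact ptC_mem_U.1 (π.le hB h1)

theorem relOf_inj_le {m n : ℕ} {π π' : Finpartition (Uconfig m n)} (h : relOf π = relOf π') :
    π.parts ⊆ π'.parts := by
  have key : ∀ z ∈ Uconfig m n, ∀ w ∈ Uconfig m n, (∃ B ∈ π.parts, z ∈ B ∧ w ∈ B) ↔
      (∃ B ∈ π'.parts, z ∈ B ∧ w ∈ B) := by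
    intro z hz w hw
    by_cases hzw : z = w
    · subst hzw
      obtain ⟨B, hB, hz1⟩ := π.exists_mem hz
      obtain ⟨B', hB', hz2⟩ := π'.exists_mem hz
      exact ⟨fun _ => ⟨B', hB', hz2, hz2⟩, fun _ => ⟨B, hB, hz1, hz1⟩⟩
    · obtain ⟨a, -, rfl⟩ := mem_U.1 hz
      obtain ⟨b, -, rfl⟩ := mem_U.1 hw
      have hab : a ≠ b := fun e => hzw (by rw [e])
      have := congrFun (congrFun h a) b
      simpa [relOf, hab] using this
  intro B hB
  obtain ⟨z, hz⟩ := π.nonempty_of_mem_parts hB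
  have hzU := π.le hB hz
  obtain ⟨B', hB', hz'⟩ := π'.exists_mem hzU
  have : B = B' := by
    ext w
    constructor
    · intro hw
      obtain ⟨C, hC, h1, h2⟩ := (key z hzU w (π.le hB hw)).1 ⟨B, hB, hz, hw⟩
      rwa [π'.eq_of_mem_parts hB' hC hz' h1]
    · intro hw
      obtain ⟨C, hC, h1, h2⟩ := (key z hzU w (π'.le hB' hw)).2 ⟨B', hB', hz', hw⟩
      rwa [π.eq_of_mem_parts hB hC hz h1]
  rwa [this]

theorem relOf_inj {m n : ℕ} {π π' : Finpartition (Uconfig m n)} (h : relOf π = relOf π') :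
    π = π' :=
  Finpartition.ext (Finset.Subset.antisymm (relOf_inj_le h) (relOf_inj_le h.symm))

/-- `B` lies strictly below `B'` on both axes: the convex hulls are separated by a line. -/
theorem hull_disjoint {B B' : Set ℂ} (m n : ℕ)
    (hB : ∀ z ∈ B, ∃ a, InV m n a ∧ ptC a = z) (hB' : ∀ z ∈ B', ∃ a, InV m n a ∧ ptC a = z)
    (hx : ∀ i j, ptC (.inl i) ∈ B → ptC (.inl j) ∈ B' → i < j)
    (hy : ∀ i j, ptC (.inr i) ∈ B → ptC (.inr j) ∈ B' → i < j) :
    Disjoint (convexHull ℝ B) (convexHull ℝ B') := by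
  classical
  have thr : ∀ (k : ℕ) (p q : ℕ → Prop), (∀ i, p i → i < k) → (∀ i j, p i → q j → i < j) →
      ∃ t : ℕ, (∀ i, p i → i < t) ∧ ∀ j, q j → t ≤ j := by
    intro k p q hk hpq
    have hex : ∃ t : ℕ, ∀ i, p i → i < t := ⟨k, hk⟩
    refine ⟨Nat.find hex, Nat.find_spec hex, fun j hj => ?_⟩
    by_contra hlt
    push Not at hlt
    exact Nat.find_min hex hlt fun i hi => hpq i j hi hj
  have bx : ∀ i, ptC (.inl i) ∈ B → i < m := by
    intro i hi
    obtain ⟨a, ha, h⟩ := hB _ hi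
    rw [ptC_inj h] at ha
    exact ha
  have bY : ∀ i, ptC (.inr i) ∈ B → i < n := by
    intro i hi
    obtain ⟨a, ha, h⟩ := hB _ hi
    rw [ptC_inj h] at ha
    exact ha
  obtain ⟨s, hs1, hs2⟩ := thr m (fun i => ptC (.inl i) ∈ B) (fun i => ptC (.inl i) ∈ B') bx hx
  obtain ⟨t, ht1, ht2⟩ := thr n (fun i => ptC (.inr i) ∈ B) (fun i => ptC (.inr i) ∈ B') bY hy
  set S : ℝ := s + 1 / 2 with hS
  set T : ℝ := t + 1 / 2 with hT
  have hS0 : 0 < S := by positivity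
  have hT0 : 0 < T := by positivity
  let f : ℂ →ₗ[ℝ] ℝ := T • Complex.reLm + S • Complex.imLm
  have hf : ∀ z, f z = T * z.re + S * z.im := fun z => by simp [f]
  have c1 : convexHull ℝ B ⊆ {z | f z < S * T} := by
    refine convexHull_min ?_ (convex_halfSpace_lt f.isLinear _)
    intro z hz
    obtain ⟨a | a, -, rfl⟩ := hB z hz
    · have : (a : ℝ) + 1 ≤ s := by exact_mod_cast hs1 a hz
      simp only [Set.mem_ofPred_eq, hf, ptC_inl_re, ptC_inl_im]
      nlinarith
    · have : (a : ℝ) + 1 ≤ t := by exact_mod_cast ht1 a hz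
      simp only [Set.mem_ofPred_eq, hf, ptC_inr_re, ptC_inr_im]
      nlinarith
  have c2 : convexHull ℝ B' ⊆ {z | S * T < f z} := by
    refine convexHull_min ?_ (convex_halfSpace_gt f.isLinear _)
    intro z hz
    obtain ⟨a | a, -, rfl⟩ := hB' z hz
    · have : (s : ℝ) ≤ a := by exact_mod_cast hs2 a hz
      simp only [Set.mem_ofPred_eq, hf, ptC_inl_re, ptC_inl_im]
      nlinarith
    · have : (t : ℝ) ≤ a := by exact_mod_cast ht2 a hz
      simp only [Set.mem_ofPred_eq, hf, ptC_inr_re, ptC_inr_im]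
      nlinarith
  rw [Set.disjoint_left]
  intro z h1 h2
  have l1 : f z < S * T := c1 h1
  have l2 : S * T < f z := c2 h2
  exact lt_asymm l1 l2

/-- Two distinct classes are comparable. -/
theorem classes_comparable {r : Pt → Pt → Prop} (hr : Good r) {p q : Pt} (hpq : ¬ r p q) :
    ((∀ i j, r p (.inl i) → r q (.inl j) → i < j) ∧
      (∀ i j, r p (.inr i) → r q (.inr j) → i < j)) ∨
    ((∀ i j, r q (.inl i) → r p (.inl j) → i < j) ∧
      (∀ i j, r q (.inr i) → r p (.inr j) → i < j)) := by
  have no : ∀ a, r p a → r q a → False := fun a h1 h2 => hpq (hr.trans _ _ _ h1 (hr.symm _ _ h2))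
  have rel : ∀ c a b, r c a → r c b → r a b :=
    fun c a b h1 h2 => hr.trans _ _ _ (hr.symm _ _ h1) h2
  -- generic dichotomy on one axis
  have dich : ∀ (e : ℕ → Pt), (∀ i j k, i < j → j < k → r (e i) (e k) → r (e i) (e j)) →
      (∀ i j, r p (e i) → r q (e j) → i < j) ∨ (∀ i j, r q (e i) → r p (e j) → i < j) := by
    intro e he
    by_contra hcon
    push Not at hcon
    obtain ⟨⟨i, j, hi, hj, hij⟩, ⟨k, l, hk, hl, hkl⟩⟩ := hcon
    have n1 : i ≠ j := by rintro rfl; exact no _ hi hj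
    have n2 : k ≠ l := by rintro rfl; exact no _ hl hk
    have n3 : i ≠ k := by rintro rfl; exact no _ hi hk
    have n4 : l ≠ j := by rintro rfl; exact no _ hl hj
    have no' : ∀ a b c d, r p (e a) → r p (e b) → r q (e c) → r q (e d) →
        ¬ (a < c ∧ c < b) ∧ ¬ (c < a ∧ a < d) := by
      intro a b c d ha hb hc hd
      refine ⟨fun h => ?_, fun h => ?_⟩
      · exact no _ (hr.trans _ _ _ ha (he a c b h.1 h.2 (rel p _ _ ha hb))) hc
      · exact no _ ha (hr.trans _ _ _ hc (he c a d h.1 h.2 (rel q _ _ hc hd)))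
    have t1 := no' i l j k hi hl hj hk
    have t2 := no' l i k j hl hi hk hj
    have t3 := no' l i j k hl hi hj hk
    have t4 := no' i l k j hi hl hk hj
    omega
  have cross : ∀ c d, ¬ r c d → ∀ i i' j j', r c (.inl i) → r d (.inl i') → r c (.inr j') →
      r d (.inr j) → i < i' → j < j' → False := by
    intro c d hcd i i' j j' h1 h2 h3 h4 hi hj
    have := hr.cc i i' j j' hi hj (rel c _ _ h1 h3) (rel d _ _ h2 h4)
    exact hcd (hr.trans _ _ _ (hr.trans _ _ _ h1 this) (hr.symm _ _ h2))
  have hqp : ¬ r q p := fun h => hpq (hr.symm _ _ h)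
  have cpq := cross p q hpq
  have cqp := cross q p hqp
  by_cases ex : (∃ i, r p (.inl i)) ∧ ∃ j, r q (.inl j)
  · by_cases ey : (∃ i, r p (.inr i)) ∧ ∃ j, r q (.inr j)
    · obtain ⟨⟨i, hi⟩, ⟨i', hi'⟩⟩ := ex
      obtain ⟨⟨j, hj⟩, ⟨j', hj'⟩⟩ := ey
      rcases dich Sum.inl hr.cx with hx | hx <;> rcases dich Sum.inr hr.cy with hy | hy
      · exact Or.inl ⟨hx, hy⟩
      · exact (cpq i i' j' j hi hi' hj hj' (hx _ _ hi hi') (hy _ _ hj' hj)).elim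
      · exact (cqp i' i j j' hi' hi hj' hj (hx _ _ hi' hi) (hy _ _ hj hj')).elim
      · exact Or.inr ⟨hx, hy⟩
    · rcases dich Sum.inl hr.cx with hx | hx
      · exact Or.inl ⟨hx, fun i j h1 h2 => (ey ⟨⟨i, h1⟩, ⟨j, h2⟩⟩).elim⟩
      · exact Or.inr ⟨hx, fun i j h1 h2 => (ey ⟨⟨j, h2⟩, ⟨i, h1⟩⟩).elim⟩
  · rcases dich Sum.inr hr.cy with hy | hy
    · exact Or.inl ⟨fun i j h1 h2 => (ex ⟨⟨i, h1⟩, ⟨j, h2⟩⟩).elim, hy⟩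
    · exact Or.inr ⟨fun i j h1 h2 => (ex ⟨⟨j, h2⟩, ⟨i, h1⟩⟩).elim, hy⟩

theorem relOf_surj {m n : ℕ} {r : Pt → Pt → Prop} (h : r ∈ SS m n) :
    ∃ π : Finpartition (Uconfig m n), IsNoncrossing π ∧ relOf π = r := by
  classical
  have hg := h.1
  let s : Setoid ℂ :=
    { r := fun z w => z = w ∨ ∃ a b, ptC a = z ∧ ptC b = w ∧ r a b
      iseqv := by
        refine ⟨fun z => Or.inl rfl, ?_, ?_⟩
        · rintro z w (rfl | ⟨a, b, rfl, rfl, hr⟩)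
          · exact Or.inl rfl
          · exact Or.inr ⟨b, a, rfl, rfl, hg.symm _ _ hr⟩
        · rintro z w v (rfl | ⟨a, b, rfl, rfl, hr⟩) (rfl | ⟨a', b', h1, rfl, hr'⟩)
          · exact Or.inl rfl
          · exact Or.inr ⟨a', b', h1, rfl, hr'⟩
          · exact Or.inr ⟨a, b, rfl, rfl, hr⟩
          · rw [ptC_inj h1] at hr'
            exact Or.inr ⟨a, b', rfl, rfl, hg.trans _ _ _ hr hr'⟩ }
  have hs : ∀ a b, s.r (ptC a) (ptC b) ↔ r a b := by
    intro a b
    constructor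
    · rintro (e | ⟨a', b', h1, h2, hr⟩)
      · rw [ptC_inj e]
        exact hg.refl _
      · rwa [ptC_inj h1, ptC_inj h2] at hr
    · exact fun hr => Or.inr ⟨a, b, rfl, rfl, hr⟩
  have parts : ∀ B, B ∈ (Finpartition.ofSetSetoid s (Uconfig m n)).parts ↔
      ∃ a, InV m n a ∧ (Uconfig m n).filter (fun b => s.r (ptC a) b) = B := by
    intro B
    rw [Finpartition.ofSetSetoid_parts, Finset.mem_image]
    constructor
    · rintro ⟨z, hz, rfl⟩
      obtain ⟨a, ha, rfl⟩ := mem_U.1 hz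
      exact ⟨a, ha, rfl⟩
    · rintro ⟨a, ha, rfl⟩
      exact ⟨ptC a, ptC_mem_U.2 ha, rfl⟩
  refine ⟨Finpartition.ofSetSetoid s (Uconfig m n), ?_, ?_⟩
  · intro B hB B' hB' hne
    obtain ⟨p, hp, rfl⟩ := (parts B).1 hB
    obtain ⟨q, hq, rfl⟩ := (parts B').1 hB'
    have mm : ∀ c a, ptC a ∈ (((Uconfig m n).filter (fun b => s.r (ptC c) b) : Finset ℂ) : Set ℂ) →
        r c a := by
      intro c a ha
      rw [Finset.mem_coe, Finset.mem_filter] at ha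
      exact (hs _ _).1 ha.2
    have sub : ∀ c, ∀ z ∈ (((Uconfig m n).filter (fun b => s.r (ptC c) b) : Finset ℂ) : Set ℂ),
        ∃ a, InV m n a ∧ ptC a = z := by
      intro c z hz
      rw [Finset.mem_coe, Finset.mem_filter] at hz
      exact mem_U.1 hz.1
    have hpq : ¬ r p q := by
      intro hr
      apply hne
      ext z
      simp only [Finset.mem_filter, and_congr_right_iff]
      intro hz
      obtain ⟨a, -, rfl⟩ := mem_U.1 hz
      rw [hs, hs]
      exact ⟨fun h => hg.trans _ _ _ (hg.symm _ _ hr) h, fun h => hg.trans _ _ _ hr h⟩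
    rcases classes_comparable hg hpq with ⟨hx, hy⟩ | ⟨hx, hy⟩
    · exact hull_disjoint m n (sub p) (sub q) (fun i j h1 h2 => hx i j (mm _ _ h1) (mm _ _ h2))
        (fun i j h1 h2 => hy i j (mm _ _ h1) (mm _ _ h2))
    · exact (hull_disjoint m n (sub q) (sub p)
        (fun i j h1 h2 => hx i j (mm _ _ h1) (mm _ _ h2))
        (fun i j h1 h2 => hy i j (mm _ _ h1) (mm _ _ h2))).symm
  · funext a b
    rw [eq_iff_iff]
    constructor
    · rintro (rfl | ⟨B, hB, h1, h2⟩)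
      · exact hg.refl _
      · obtain ⟨p, hp, rfl⟩ := (parts B).1 hB
        rw [Finset.mem_filter, hs] at h1 h2
        exact hg.trans _ _ _ (hg.symm _ _ h1.2) h2.2
    · intro hr
      by_cases hab : a = b
      · exact Or.inl hab
      · right
        have ha := h.2 _ _ hr hab
        have hb := h.2 _ _ (hg.symm _ _ hr) (Ne.symm hab)
        refine ⟨_, (parts _).2 ⟨a, ha, rfl⟩, ?_, ?_⟩
        · rw [Finset.mem_filter, hs]
          exact ⟨ptC_mem_U.2 ha, hg.refl _⟩
        · rw [Finset.mem_filter, hs]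
          exact ⟨ptC_mem_U.2 hb, hr⟩

noncomputable def ncEquiv (m n : ℕ) : NC (Uconfig m n) ≃ SS m n :=
  Equiv.ofBijective (fun π => ⟨relOf π.1, relOf_mem π.2⟩) (by
    constructor
    · intro π π' h
      exact Subtype.ext (relOf_inj (congrArg Subtype.val h))
    · rintro ⟨r, hr⟩
      obtain ⟨π, h1, h2⟩ := relOf_surj hr
      exact ⟨⟨π, h1⟩, Subtype.ext h2⟩)

theorem SS_finite (m n : ℕ) : (SS m n).Finite := by
  have : Finite (NC (Uconfig m n)) := inferInstance
  have h2 : Finite (SS m n) := Finite.of_equiv _ (ncEquiv m n)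
  exact Set.toFinite _

theorem card_NC (m n : ℕ) : Nat.card (NC (Uconfig m n)) = (SS m n).ncard := by
  rw [Nat.card_congr (ncEquiv m n)]
  rfl

/-- For `m ≥ 2` and `n ≥ 1`,
`u_{m,n} = 2 u_{m-1,n} + Σ_{k=1}^{n} u_{m-1,k-1} 2^{n-k}` where `u_{m,n} = |NC(U_{m,n})|`. -/
theorem nc_U_card_recursion (m n : ℕ) (hm : 2 ≤ m) (hn : 1 ≤ n) :
    Nat.card (NC (Uconfig m n)) =
      2 * Nat.card (NC (Uconfig (m - 1) n)) +
        ∑ k ∈ Finset.Icc 1 n, Nat.card (NC (Uconfig (m - 1) (k - 1))) * 2 ^ (n - k) := by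
  obtain ⟨m, rfl⟩ : ∃ m', m = m' + 2 := ⟨m - 2, by omega⟩
  simp only [card_NC]
  rw [rec_x SS_finite, DD_card SS_finite]
  rfl
end

section
/- Define u_{m,n} = |NC(U_{m,n})| for (m,n) ≠ (0,0) and u_{0,0} = 0. In the ring of formal power series ℤ⟦X, Y⟧ in two variables, the generating function U(X,Y) = Σ_{m,n ≥ 0} u_{m,n} X^m Y^n satisfies (1 − 2X − 2Y + 3XY) · U(X,Y) = X + Y − 2XY. -/
open Finset

/-- `u_{m,n} = |NC(U_{m,n})|` for `(m,n) ≠ (0,0)`, and `u_{0,0} = 0`. -/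
noncomputable def useq (m n : ℕ) : ℤ :=
  if m = 0 ∧ n = 0 then 0 else (Nat.card (NC (Uconfig m n)) : ℤ)

/-- The bivariate generating function `U(X,Y) = Σ u_{m,n} X^m Y^n` in `ℤ⟦X,Y⟧`, where
the variable `X` is `MvPowerSeries.X 0` and `Y` is `MvPowerSeries.X 1`. -/
noncomputable def Useries : MvPowerSeries (Fin 2) ℤ := fun d => useq (d 0) (d 1)


namespace NCU

/-- Index type: `(false, i)` is the real point `i`, `(true, j)` the imaginary point `j i`. -/
abbrev Ix := Bool × ℕ

def NCr (r : Setoid Ix) : Prop :=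
  ∀ p p' q q' : Ix, r p p' → r q q' → p.1 = q.1 → p'.1 = q'.1 → q.2 < p.2 → p'.2 < q'.2 → r p q

def Supp (N : Bool → ℕ) (r : Setoid Ix) : Prop :=
  ∀ p q : Ix, r p q → p ≠ q → 1 ≤ p.2 ∧ p.2 ≤ N p.1

def V (N : Bool → ℕ) : Set (Setoid Ix) := {r | NCr r ∧ Supp N r}

def S (b : Bool) (N : Bool → ℕ) : Set (Setoid Ix) :=
  {r | r ∈ V N ∧ 0 < N b ∧ ∀ j, ¬ r (b, N b) (!b, j)}

def J (b : Bool) (N : Bool → ℕ) : Set (Setoid Ix) :=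
  {r | r ∈ S b N ∧ r (b, N b) (b, N b - 1)}

def A (N : Bool → ℕ) : Set (Setoid Ix) :=
  {r | r ∈ V N ∧ r (false, N false) (true, N true)}

/-- make `x` a singleton -/
def isol (x : Ix) (r : Setoid Ix) : Setoid Ix where
  r p q := p = q ∨ (p ≠ x ∧ q ≠ x ∧ r p q)
  iseqv := ⟨fun _ => Or.inl rfl, by
    rintro p q (h | ⟨h1, h2, h3⟩)
    · exact Or.inl h.symm
    · exact Or.inr ⟨h2, h1, r.symm h3⟩, by
    rintro p q s (h | ⟨h1, h2, h3⟩) (h' | ⟨h1', h2', h3'⟩)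
    · exact Or.inl (h.trans h')
    · subst h; exact Or.inr ⟨h1', h2', h3'⟩
    · subst h'; exact Or.inr ⟨h1, h2, h3⟩
    · exact Or.inr ⟨h1, h2', r.trans h3 h3'⟩⟩

lemma isol_iff (x : Ix) (r : Setoid Ix) (p q : Ix) :
    isol x r p q ↔ p = q ∨ (p ≠ x ∧ q ≠ x ∧ r p q) := Iff.rfl

def gmap (x y : Ix) (p : Ix) : Ix := if p = x then y else p

/-- put `x` in the block of `y` -/
def putIn (x y : Ix) (r : Setoid Ix) : Setoid Ix := r.comap (gmap x y)

lemma putIn_iff (x y : Ix) (r : Setoid Ix) (p q : Ix) :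
    putIn x y r p q ↔ r (gmap x y p) (gmap x y q) := Iff.rfl

/-- cut the block of `x` along axes -/
def cut (x : Ix) (r : Setoid Ix) : Setoid Ix where
  r p q := r p q ∧ (r p x → p.1 = q.1)
  iseqv := ⟨fun p => ⟨r.refl p, fun _ => rfl⟩,
    fun {p q} h => ⟨r.symm h.1, fun h' => (h.2 (r.trans h.1 h')).symm⟩,
    fun {p q s} h h' => ⟨r.trans h.1 h'.1, fun h2 =>
      (h.2 h2).trans (h'.2 (r.trans (r.symm h.1) h2))⟩⟩

lemma cut_iff (x : Ix) (r : Setoid Ix) (p q : Ix) :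
    cut x r p q ↔ r p q ∧ (r p x → p.1 = q.1) := Iff.rfl

/-- merge the blocks of `x` and `y` -/
def merge (x y : Ix) (r : Setoid Ix) : Setoid Ix where
  r p q := r p q ∨ (r p x ∧ r q y) ∨ (r p y ∧ r q x)
  iseqv := by
    have sy : ∀ {a b}, r a b → r b a := fun h => r.symm h
    have tr : ∀ {a b c}, r a b → r b c → r a c := fun h h' => r.trans h h'
    refine ⟨fun p => Or.inl (r.refl p), ?_, ?_⟩
    · intro p q h
      rcases h with h | h | h
      · exact Or.inl (sy h)
      · exact Or.inr (Or.inr ⟨h.2, h.1⟩)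
      · exact Or.inr (Or.inl ⟨h.2, h.1⟩)
    · intro p q s h h'
      rcases h with h | ⟨h1, h2⟩ | ⟨h1, h2⟩ <;> rcases h' with h' | ⟨h1', h2'⟩ | ⟨h1', h2'⟩
      · exact Or.inl (tr h h')
      · exact Or.inr (Or.inl ⟨tr h h1', h2'⟩)
      · exact Or.inr (Or.inr ⟨tr h h1', h2'⟩)
      · exact Or.inr (Or.inl ⟨h1, tr (sy h') h2⟩)
      · exact Or.inr (Or.inl ⟨h1, h2'⟩)
      · exact Or.inl (tr h1 (sy h2'))
      · exact Or.inr (Or.inr ⟨h1, tr (sy h') h2⟩)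
      · exact Or.inl (tr h1 (sy h2'))
      · exact Or.inr (Or.inr ⟨h1, h2'⟩)

lemma merge_iff (x y : Ix) (r : Setoid Ix) (p q : Ix) :
    merge x y r p q ↔ r p q ∨ (r p x ∧ r q y) ∨ (r p y ∧ r q x) := Iff.rfl

lemma encard_eq_of_maps {α : Type*} {s t : Set α} (f g : α → α)
    (hf : ∀ a ∈ s, f a ∈ t) (hg : ∀ a ∈ t, g a ∈ s)
    (hgf : ∀ a ∈ s, g (f a) = a) (hfg : ∀ a ∈ t, f (g a) = a) : s.encard = t.encard := by
  have hb : Set.BijOn f s t := Set.InvOn.bijOn ⟨hgf, hfg⟩ hf hg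
  rw [← hb.image_eq, hb.injOn.encard_image]

section
variable {b : Bool} {N N' : Bool → ℕ}

lemma isol_mem {r : Setoid Ix} (h1 : N' b = N b + 1) (h2 : N' (!b) = N (!b)) (hr : r ∈ V N') :
    isol (b, N' b) r ∈ V N := by
  obtain ⟨hn, hs⟩ := hr
  constructor
  · intro p p' q q' hp hq e e' l l'
    rw [isol_iff] at *
    rcases hp with hp | ⟨hp1, hp2, hp⟩ <;> rcases hq with hq | ⟨hq1, hq2, hq⟩
    · subst hp hq; omega
    · subst hp
      have := hn p p q q' (r.refl _) hq e e' l l'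
      refine Or.inr ⟨?_, hq1, this⟩
      rintro rfl
      have := hs q' q (r.symm hq) (by rintro rfl; omega)
      rw [← e'] at this
      simp at l'
      simp at this
      omega
    · subst hq
      have := hn p p' q q hp (r.refl _) e e' l l'
      refine Or.inr ⟨hp1, ?_, this⟩
      rintro rfl
      have := hs p p' hp (by rintro rfl; omega)
      rw [e] at this
      simp at l
      simp at this
      omega
    · exact Or.inr ⟨hp1, hq1, hn p p' q q' hp hq e e' l l'⟩
  · intro p q h hne
    rw [isol_iff] at h
    rcases h with h | ⟨hp, hq, h⟩
    · exact absurd h hne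
    · have := hs p q h hne
      obtain ⟨c, i⟩ := p
      by_cases hc : c = b
      · subst hc
        simp at *
        omega
      · have : c = !b := by cases b <;> cases c <;> simp_all
        subst this
        simp at *
        omega

lemma V_mono (h1 : N' b = N b + 1) (h2 : N' (!b) = N (!b)) : V N ⊆ V N' := by
  rintro r ⟨hn, hs⟩
  refine ⟨hn, fun p q h hne => ?_⟩
  have := hs p q h hne
  obtain ⟨c, i⟩ := p
  by_cases hc : c = b
  · subst hc
    simp at *
    omega
  · have : c = !b := by cases b <;> cases c <;> simp_all
    subst this
    simp at *
    omega

lemma isolated {r : Setoid Ix} (hr : r ∈ V N) {p : Ix} (hp : N p.1 < p.2 ∨ p.2 = 0) {q : Ix}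
    (h : r p q) : p = q := by
  by_contra hne
  have := hr.2 p q h hne
  omega

lemma gmap_fst (i j : ℕ) (p : Ix) : (gmap (b, i) (b, j) p).1 = p.1 := by
  simp only [gmap]; split_ifs with h
  · rw [h]
  · rfl

lemma gmap_mono (j : ℕ) {p q : Ix} (e : p.1 = q.1) (l : q.2 < p.2) :
    (gmap (b, j + 1) (b, j) q).2 < (gmap (b, j + 1) (b, j) p).2 ∨
      gmap (b, j + 1) (b, j) q = gmap (b, j + 1) (b, j) p := by
  obtain ⟨c, i⟩ := p
  obtain ⟨d, k⟩ := q
  simp only at e l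
  subst e
  simp only [gmap, Prod.mk.injEq]
  split_ifs with h h' h'
  · omega
  · left; simp only; omega
  · obtain ⟨rfl, rfl⟩ := h'
    by_cases hk : k = j
    · right; rw [hk]
    · left; simp only; omega
  · left; simpa using l

lemma putIn_mem {r : Setoid Ix} (h1 : N' b = N b + 1) (h2 : N' (!b) = N (!b)) (hr : r ∈ S b N) :
    putIn (b, N' b) (b, N b) r ∈ V N' := by
  obtain ⟨hr, h0, hS⟩ := hr
  constructor
  · intro p p' q q' hp hq e e' l l'
    rw [putIn_iff] at *
    rw [h1] at *
    rcases gmap_mono (b := b) (N b) e l with m | m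
    · rcases gmap_mono (b := b) (N b) e'.symm l' with m' | m'
      · exact hr.1 _ _ _ _ hp hq (by rw [gmap_fst, gmap_fst, e]) (by rw [gmap_fst, gmap_fst, e'])
          m m'
      · rw [m'] at hp
        exact r.trans hp (r.symm hq)
    · rw [m]
  · intro p q h hne
    rw [putIn_iff] at h
    by_cases hx : p = (b, N' b)
    · subst hx; simp; omega
    · have gp : gmap (b, N' b) (b, N b) p = p := by simp [gmap, hx]
      rw [gp] at h
      by_cases hpq : p = gmap (b, N' b) (b, N b) q
      · have : q = (b, N' b) := by
          by_contra hq
          simp [gmap, hq] at hpq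
          exact hne hpq
        simp [gmap, this] at hpq
        subst hpq
        simp; omega
      · exact (V_mono h1 h2 hr).2 _ _ h hpq

lemma S_eq (h1 : N' b = N b + 1) (h2 : N' (!b) = N (!b)) : S b N' = V N ∪ J b N' := by
  ext r
  constructor
  · intro hr
    by_cases hx : ∃ q, r (b, N' b) q ∧ (b, N' b) ≠ q
    · right
      refine ⟨hr, ?_⟩
      obtain ⟨⟨c, i⟩, hq, hne⟩ := hx
      have hc : c = b := by
        by_contra hc
        have : c = !b := by cases b <;> cases c <;> simp_all
        subst this
        exact hr.2.2 _ hq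
      subst hc
      have hsu := hr.1.2 _ _ (r.symm hq) hne.symm
      have hi : i ≠ N' c := by rintro rfl; exact hne rfl
      simp only at hsu
      by_cases hi2 : i = N' c - 1
      · rw [← hi2]; exact hq
      · exact hr.1.1 (c, N' c) (c, i) (c, N' c - 1) (c, N' c - 1) hq (r.refl _) rfl rfl
          (by simp only; omega) (by simp only; omega)
    · left
      push Not at hx
      refine ⟨hr.1.1, fun p q h hne => ?_⟩
      have := hr.1.2 p q h hne
      obtain ⟨c, i⟩ := p
      by_cases hc : c = b
      · subst hc
        have : i ≠ N' c := by
          rintro rfl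
          exact hne (hx _ h)
        simp at *
        omega
      · have : c = !b := by cases b <;> cases c <;> simp_all
        subst this
        simp at *
        omega
  · rintro (hr | hr)
    · refine ⟨V_mono h1 h2 hr, by omega, fun j hj => ?_⟩
      have := isolated hr (Or.inl (by simp only; omega)) hj
      simp at this
    · exact hr.1

lemma S_disj (h1 : N' b = N b + 1) : Disjoint (V N) (J b N') := by
  rw [Set.disjoint_left]
  rintro r hr ⟨_, h⟩
  have := isolated hr (Or.inl (by simp only; omega)) h
  simp at this
  omega

lemma J_card (h1 : N' b = N b + 1) (h2 : N' (!b) = N (!b)) :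
    (J b N').encard = (S b N).encard := by
  have e1 : N' b - 1 = N b := by omega
  apply encard_eq_of_maps (isol (b, N' b)) (putIn (b, N' b) (b, N b))
  · rintro r ⟨hr, hx⟩
    rw [e1] at hx
    refine ⟨isol_mem h1 h2 hr.1, ?_, fun j hj => ?_⟩
    · have := hr.1.2 _ _ (r.symm hx) (by simp; omega)
      exact this.1
    · rw [isol_iff] at hj
      simp at hj
      exact hr.2.2 j (r.trans hx hj.2)
  · intro r hr
    refine ⟨⟨putIn_mem h1 h2 hr, by omega, fun j hj => ?_⟩, ?_⟩
    · rw [putIn_iff] at hj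
      simp [gmap] at hj
      exact hr.2.2 j hj
    · rw [putIn_iff, e1]
      simp [gmap]
  · rintro r ⟨hr, hx⟩
    rw [e1] at hx
    ext p q
    rw [putIn_iff, isol_iff]
    have hg : ∀ p, r (gmap (b, N' b) (b, N b) p) p := by
      intro p
      simp only [gmap]; split_ifs with h
      · rw [h]; exact r.symm hx
      · exact r.refl _
    have hne : ∀ p, gmap (b, N' b) (b, N b) p ≠ (b, N' b) := by
      intro p
      simp only [gmap]; split_ifs with h
      · simp; omega
      · exact h
    constructor
    · rintro (h | h)
      · have := hg p
        rw [h] at this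
        exact r.trans (r.symm this) (hg q)
      · exact r.trans (r.symm (hg p)) (r.trans h.2.2 (hg q))
    · intro h
      exact Or.inr ⟨hne p, hne q, r.trans (hg p) (r.trans h (r.symm (hg q)))⟩
  · intro r hr
    ext p q
    rw [isol_iff, putIn_iff]
    have hi : ∀ q, r (b, N' b) q → (b, N' b) = q := fun q hq =>
      isolated hr.1 (Or.inl (by simp only; omega)) hq
    constructor
    · rintro (h | ⟨h, h', h''⟩)
      · rw [h]
      · simpa [gmap, h, h'] using h''
    · intro h
      by_cases hp : p = (b, N' b)
      · subst hp; exact Or.inl (hi _ h)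
      by_cases hq : q = (b, N' b)
      · subst hq; exact Or.inl (hi _ (r.symm h)).symm
      exact Or.inr ⟨hp, hq, by simpa [gmap, hp, hq] using h⟩

lemma S_card (h1 : N' b = N b + 1) (h2 : N' (!b) = N (!b)) :
    (S b N').encard = (V N).encard + (S b N).encard := by
  rw [S_eq h1 h2, Set.encard_union_eq (S_disj h1), J_card h1 h2]

end

section
variable {N : Bool → ℕ}

lemma V_eq (h : 0 < N false ∨ 0 < N true) : V N = (S false N ∪ S true N) ∪ A N := by
  ext r
  constructor
  · intro hr
    by_contra hc
    have hA : ¬ r (false, N false) (true, N true) := fun h => hc (Or.inr ⟨hr, h⟩)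
    have hs : ∀ b, 0 < N b → ∃ j, r (b, N b) (!b, j) := by
      intro b hb
      by_contra hh
      push Not at hh
      apply hc
      left
      cases b
      · exact Or.inl ⟨hr, hb, hh⟩
      · exact Or.inr ⟨hr, hb, hh⟩
    have key : ∀ b, 0 < N b → ∃ j, r (b, N b) (!b, j) ∧ 1 ≤ j ∧ j ≤ N (!b) := by
      intro b hb
      obtain ⟨j, hj⟩ := hs b hb
      exact ⟨j, hj, hr.2 _ _ (r.symm hj) (by simp)⟩
    have h1 : 0 < N false := by
      rcases h with h | h
      · exact h
      · obtain ⟨j, _, h1, h2⟩ := key _ h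
        simp at h2; omega
    have h2 : 0 < N true := by
      obtain ⟨j, _, h1, h2⟩ := key _ h1
      simp at h2; omega
    obtain ⟨j, hj, j1, j2⟩ := key _ h1
    obtain ⟨i, hi, i1, i2⟩ := key _ h2
    simp only [Bool.not_false, Bool.not_true] at *
    have hj' : j ≠ N true := by rintro rfl; exact hA hj
    have hi' : i ≠ N false := by rintro rfl; exact hA (r.symm hi)
    have := hr.1 (false, N false) (true, j) (false, i) (true, N true) hj (r.symm hi) rfl rfl
      (by simp only; omega) (by simp only; omega)
    exact hA (r.trans this (r.symm hi))
  · rintro ((h | h) | h) <;> exact h.1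

lemma VA_disj : Disjoint (S false N ∪ S true N) (A N) := by
  rw [Set.disjoint_left]
  rintro r (h | h) h'
  · exact h.2.2 _ h'.2
  · exact h.2.2 _ (r.symm h'.2)

lemma cut_mem {r : Setoid Ix} (hr : r ∈ A N) : cut (false, N false) r ∈ S false N ∩ S true N := by
  obtain ⟨hr, hA⟩ := hr
  have hV : cut (false, N false) r ∈ V N := by
    constructor
    · intro p p' q q' hp hq e e' l l'
      rw [cut_iff] at *
      exact ⟨hr.1 _ _ _ _ hp.1 hq.1 e e' l l', fun _ => e⟩
    · intro p q h hne
      exact hr.2 _ _ h.1 hne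
  have n1 := hr.2 _ _ hA (by simp)
  have n2 := hr.2 _ _ (r.symm hA) (by simp)
  refine ⟨⟨hV, n1.1, fun j hj => ?_⟩, ⟨hV, n2.1, fun j hj => ?_⟩⟩
  · rw [cut_iff] at hj
    have := hj.2 (r.refl _)
    simp at this
  · rw [cut_iff] at hj
    have := hj.2 (r.symm hA)
    simp at this

lemma pureS {b : Bool} {r : Setoid Ix} (hr : r ∈ S b N) {p : Ix} (h : r p (b, N b)) : p.1 = b := by
  obtain ⟨c, i⟩ := p
  by_contra hc
  have : c = !b := by cases b <;> cases c <;> simp_all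
  subst this
  exact hr.2.2 _ (r.symm h)

/-- a mixed relation cannot reach above a member of the pure top block -/
lemma noAbove {b : Bool} {r : Setoid Ix} (hr : r ∈ S b N) {p q q' : Ix} (hp : r p (b, N b))
    (hq : r q q') (h1 : q.1 = b) (h2 : q'.1 ≠ b) (h : p.2 < q.2) : False := by
  have hsu := hr.1.2 q q' hq (by rintro rfl; exact h2 h1)
  have hp1 := pureS hr hp
  obtain ⟨c, i⟩ := q
  obtain ⟨d, k⟩ := p
  simp only at h1 hp1 h hsu
  subst h1 hp1
  have : r (d, N d) (d, i) := by
    by_cases hi : i = N d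
    · rw [hi]
    · exact hr.1.1 (d, N d) (d, k) (d, i) (d, i) (r.symm hp) (r.refl _) rfl rfl
        (by simp only; omega) (by simp only; omega)
  exact h2 (pureS hr (r.symm (r.trans this hq)))

lemma merge_mem {r : Setoid Ix} (hr : r ∈ S false N ∩ S true N) :
    merge (false, N false) (true, N true) r ∈ A N := by
  obtain ⟨h1, h2⟩ := hr
  refine ⟨⟨?_, ?_⟩, Or.inr (Or.inl ⟨r.refl _, r.refl _⟩)⟩
  · intro p p' q q' hp hq e e' l l'
    rw [merge_iff] at *
    rcases hp with hp | ⟨hp, hp'⟩ | ⟨hp, hp'⟩ <;> rcases hq with hq | ⟨hq, hq'⟩ | ⟨hq, hq'⟩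
    · exact Or.inl (h1.1.1 _ _ _ _ hp hq e e' l l')
    · exact (noAbove h1 hq hp (by rw [e, pureS h1 hq])
        (by rw [e', pureS h2 hq']; simp) l).elim
    · exact (noAbove h2 hq hp (by rw [e, pureS h2 hq])
        (by rw [e', pureS h1 hq']; simp) l).elim
    · exact (noAbove h2 hp' (r.symm hq) (by rw [← e', pureS h2 hp'])
        (by rw [← e, pureS h1 hp]; simp) l').elim
    · exact Or.inl (r.trans hp (r.symm hq))
    · exact Or.inr (Or.inl ⟨hp, hq⟩)
    · exact (noAbove h1 hp' (r.symm hq) (by rw [← e', pureS h1 hp'])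
        (by rw [← e, pureS h2 hp]; simp) l').elim
    · exact Or.inr (Or.inr ⟨hp, hq⟩)
    · exact Or.inl (r.trans hp (r.symm hq))
  · have key : ∀ b p, r ∈ S b N → r p (b, N b) → 1 ≤ p.2 ∧ p.2 ≤ N p.1 := by
      intro b p hb h
      by_cases hpb : p = (b, N b)
      · subst hpb; exact ⟨hb.2.1, le_rfl⟩
      · exact hb.1.2 _ _ h hpb
    intro p q h hne
    rw [merge_iff] at h
    rcases h with h | h | h
    · exact h1.1.2 _ _ h hne
    · exact key _ _ h1 h.1
    · exact key _ _ h2 h.1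

lemma A_card : (A N).encard = (S false N ∩ S true N).encard := by
  apply encard_eq_of_maps (cut (false, N false)) (merge (false, N false) (true, N true))
  · intro r hr; exact cut_mem hr
  · intro r hr; exact merge_mem hr
  · rintro r ⟨hr, hA⟩
    ext p q
    rw [merge_iff]
    simp only [cut_iff]
    constructor
    · rintro (h | h | h)
      · exact h.1
      · exact r.trans h.1.1 (r.trans hA (r.symm h.2.1))
      · exact r.trans h.1.1 (r.trans (r.symm hA) (r.symm h.2.1))
    · intro h
      by_cases hp : r p (false, N false)
      · have hq := r.trans (r.symm h) hp
        have hp2 := r.trans hp hA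
        have hq2 := r.trans hq hA
        obtain ⟨c, i⟩ := p
        obtain ⟨d, k⟩ := q
        cases c <;> cases d <;> simp [h, hp, hq, hp2, hq2]
      · exact Or.inl ⟨h, fun h' => (hp h').elim⟩
  · rintro r ⟨h1, h2⟩
    ext p q
    rw [cut_iff]
    simp only [merge_iff]
    constructor
    · rintro ⟨h | h | h, h'⟩
      · exact h
      · have := h' (Or.inl h.1)
        rw [pureS h1 h.1, pureS h2 h.2] at this
        simp at this
      · have := h' (Or.inr (Or.inr ⟨h.1, r.refl _⟩))
        rw [pureS h2 h.1, pureS h1 h.2] at this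
        simp at this
    · intro h
      refine ⟨Or.inl h, ?_⟩
      rintro (h' | h' | h')
      · rw [pureS h1 h', pureS h1 (r.trans (r.symm h) h')]
      · have := pureS h2 h'.2
        simp at this
      · rw [pureS h2 h'.1, pureS h2 (r.trans (r.symm h) h'.1)]

lemma V_card (h : 0 < N false ∨ 0 < N true) :
    (V N).encard = (S false N).encard + (S true N).encard := by
  rw [V_eq h, Set.encard_union_eq VA_disj, A_card, Set.encard_union_add_encard_inter]

end

end NCU

namespace NCU

noncomputable def pt (p : Ix) : ℂ := if p.1 then (p.2 : ℂ) * Complex.I else (p.2 : ℂ)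

@[simp] lemma pt_true (i : ℕ) : pt (true, i) = (i : ℂ) * Complex.I := by simp [pt]
@[simp] lemma pt_false (i : ℕ) : pt (false, i) = (i : ℂ) := by simp [pt]

def Nf (m n : ℕ) (b : Bool) : ℕ := if b then n else m

open Classical in
noncomputable def co (z : ℂ) : Ix := if z.im = 0 then (false, ⌊z.re⌋₊) else (true, ⌊z.im⌋₊)

lemma co_pt {p : Ix} (h : 1 ≤ p.2) : co (pt p) = p := by
  obtain ⟨c, i⟩ := p
  simp only at h
  cases c
  · simp [co]
  · have : i ≠ 0 := by omega
    simp [co, this]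

lemma mem_U {m n : ℕ} {z : ℂ} :
    z ∈ Uconfig m n ↔ ∃ p : Ix, (1 ≤ p.2 ∧ p.2 ≤ Nf m n p.1) ∧ pt p = z := by
  simp only [Uconfig, Finset.mem_union, Finset.mem_image, Finset.mem_Icc]
  constructor
  · rintro (⟨i, hi, h⟩ | ⟨i, hi, h⟩)
    · exact ⟨(false, i), by simpa [Nf] using hi, by simpa using h⟩
    · exact ⟨(true, i), by simpa [Nf] using hi, by simpa using h⟩
  · rintro ⟨⟨c, i⟩, hi, h⟩
    cases c
    · exact Or.inl ⟨i, by simpa [Nf] using hi, by simpa using h⟩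
    · exact Or.inr ⟨i, by simpa [Nf] using hi, by simpa using h⟩

lemma pt_zero_iff {p : Ix} : pt p = 0 ↔ p.2 = 0 := by
  obtain ⟨c, i⟩ := p
  cases c <;> simp

lemma pt_mem {m n : ℕ} {p : Ix} : pt p ∈ Uconfig m n ↔ 1 ≤ p.2 ∧ p.2 ≤ Nf m n p.1 := by
  rw [mem_U]
  constructor
  · rintro ⟨q, hq, h⟩
    have : 1 ≤ p.2 := by
      by_contra hp
      have h0 : pt p = 0 := pt_zero_iff.2 (by omega)
      rw [h0, pt_zero_iff] at h
      omega
    have e : q = p := by rw [← co_pt hq.1, h, co_pt this]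
    rw [← e]; exact hq
  · intro h; exact ⟨p, h, rfl⟩

/-- separation of hulls -/
lemma sep {m n : ℕ} {B B' : Finset ℂ} (hB : B ⊆ Uconfig m n) (hB' : B' ⊆ Uconfig m n)
    (h : ∀ p q, pt p ∈ B → pt q ∈ B' → p.1 = q.1 → p.2 < q.2) :
    Disjoint (convexHull ℝ (B : Set ℂ)) (convexHull ℝ (B' : Set ℂ)) := by
  classical
  obtain ⟨θ, h1, h2⟩ : ∃ θ : Bool → ℕ, (∀ p, pt p ∈ B → p.2 ≤ θ p.1) ∧
      (∀ q, pt q ∈ B' → θ q.1 < q.2) := by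
    refine ⟨fun b => ((Finset.Icc 0 (Nf m n b)).filter (fun i => pt (b, i) ∈ B)).sup id, ?_, ?_⟩
    · intro p hp
      have := pt_mem.1 (hB hp)
      exact Finset.le_sup (f := id) (by simp [this.2, hp])
    · intro q hq
      have := pt_mem.1 (hB' hq)
      rw [Finset.sup_lt_iff (by simp; omega)]
      intro i hi
      simp at hi
      exact h _ _ hi.2 hq rfl
  let f : ℂ →ₗ[ℝ] ℝ := ((θ false : ℝ) + 1/2)⁻¹ • Complex.reLm + ((θ true : ℝ) + 1/2)⁻¹ • Complex.imLm
  have f0 : ∀ i : ℕ, f (pt (false, i)) = (i : ℝ) / ((θ false : ℝ) + 1/2) := by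
    intro i; simp [f]; ring
  have f1 : ∀ i : ℕ, f (pt (true, i)) = (i : ℝ) / ((θ true : ℝ) + 1/2) := by
    intro i; simp [f]; ring
  have f2 : ∀ p : Ix, f (pt p) = (p.2 : ℝ) / ((θ p.1 : ℝ) + 1/2) := by
    rintro ⟨c, i⟩; cases c
    · exact f0 i
    · exact f1 i
  have c1 : convexHull ℝ (B : Set ℂ) ⊆ {z | f z < 1} := by
    apply convexHull_min _ (convex_halfSpace_lt f.isLinear 1)
    intro z hz
    obtain ⟨p, hp, rfl⟩ := mem_U.1 (hB hz)
    have := h1 p hz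
    have : (p.2 : ℝ) ≤ θ p.1 := by exact_mod_cast this
    rw [Set.mem_ofPred_eq, f2, div_lt_one (by positivity)]
    linarith
  have c2 : convexHull ℝ (B' : Set ℂ) ⊆ {z | 1 < f z} := by
    apply convexHull_min _ (convex_halfSpace_gt f.isLinear 1)
    intro z hz
    obtain ⟨p, hp, rfl⟩ := mem_U.1 (hB' hz)
    have : θ p.1 + 1 ≤ p.2 := h2 p hz
    have : (θ p.1 : ℝ) + 1 ≤ p.2 := by exact_mod_cast this
    rw [Set.mem_ofPred_eq, f2, one_lt_div (by positivity)]
    linarith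
  rw [Set.disjoint_left]
  intro z hz hz'
  have := c1 hz
  have := c2 hz'
  simp only [Set.mem_ofPred_eq] at *
  linarith

lemma cross_pts {p p' q q' : Ix} (e : p.1 = q.1) (e' : p'.1 = q'.1) (l : q.2 < p.2)
    (l' : p'.2 < q'.2) : ∃ a a' c c' : ℝ, 0 ≤ a ∧ 0 ≤ a' ∧ 0 ≤ c ∧ 0 ≤ c' ∧ a + a' = 1 ∧ c + c' = 1 ∧
      a • pt p + a' • pt p' = c • pt q + c' • pt q' := by
  obtain ⟨b, k⟩ := p
  obtain ⟨b', u⟩ := p'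
  obtain ⟨d, i⟩ := q
  obtain ⟨d', j⟩ := q'
  simp only at e e' l l'
  subst e e'
  have L : (i : ℝ) < k := by exact_mod_cast l
  have L' : (u : ℝ) < j := by exact_mod_cast l'
  have i0 : (0 : ℝ) ≤ i := by positivity
  have u0 : (0 : ℝ) ≤ u := by positivity
  by_cases hb : b = b'
  · subst hb
    have D : (0 : ℝ) < (j - u) + (k - i) := by linarith
    have D' := D.ne'
    have hp : ∀ s : ℕ, pt (b, s) = ((s : ℝ) : ℂ) * pt (b, 1) := by
      intro s; cases b <;> simp
    refine ⟨(j - u) / ((j - u) + (k - i)), (k - i) / ((j - u) + (k - i)),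
      (j - u) / ((j - u) + (k - i)), (k - i) / ((j - u) + (k - i)),
      div_nonneg (by linarith) D.le, div_nonneg (by linarith) D.le,
      div_nonneg (by linarith) D.le, div_nonneg (by linarith) D.le,
      by field_simp, by field_simp, ?_⟩
    rw [hp k, hp u, hp i, hp j]
    simp only [Complex.real_smul, ← mul_assoc, ← add_mul, ← Complex.ofReal_mul,
      ← Complex.ofReal_add]
    congr 2
    field_simp
    ring
  · have D : (0 : ℝ) < k * j - i * u := by nlinarith
    have D' := D.ne'
    refine ⟨i * (j - u) / (k * j - i * u), j * (k - i) / (k * j - i * u),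
      k * (j - u) / (k * j - i * u), u * (k - i) / (k * j - i * u),
      div_nonneg (mul_nonneg (by linarith) (by linarith)) D.le,
      div_nonneg (mul_nonneg (by linarith) (by linarith)) D.le,
      div_nonneg (mul_nonneg (by linarith) (by linarith)) D.le,
      div_nonneg (mul_nonneg (by linarith) (by linarith)) D.le,
      by rw [← add_div, div_eq_one_iff_eq D']; ring, by rw [← add_div, div_eq_one_iff_eq D']; ring, ?_⟩
    have w1 : (i * (j - u) / (k * j - i * u) : ℝ) * k = (k * (j - u) / (k * j - i * u) : ℝ) * i := by
      ring
    have w2 : (j * (k - i) / (k * j - i * u) : ℝ) * u = (u * (k - i) / (k * j - i * u) : ℝ) * j := by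
      ring
    generalize (i * (j - u) / (k * j - i * u) : ℝ) = a at *
    generalize (j * (k - i) / (k * j - i * u) : ℝ) = a' at *
    generalize (k * (j - u) / (k * j - i * u) : ℝ) = c at *
    generalize (u * (k - i) / (k * j - i * u) : ℝ) = c' at *
    cases b <;> cases b' <;> simp at hb
    all_goals
      apply Complex.ext <;> simp [w1, w2]

lemma cross {p p' q q' : Ix} (e : p.1 = q.1) (e' : p'.1 = q'.1) (l : q.2 < p.2)
    (l' : p'.2 < q'.2) {B B' : Set ℂ} (h1 : pt p ∈ B) (h2 : pt p' ∈ B) (h3 : pt q ∈ B')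
    (h4 : pt q' ∈ B') : ¬ Disjoint (convexHull ℝ B) (convexHull ℝ B') := by
  obtain ⟨a, a', c, c', ha, ha', hc, hc', s, s', h⟩ := cross_pts e e' l l'
  rw [Set.not_disjoint_iff]
  refine ⟨a • pt p + a' • pt p', ?_, ?_⟩
  · exact convex_convexHull ℝ B (subset_convexHull ℝ B h1) (subset_convexHull ℝ B h2) ha ha' s
  · rw [h]
    exact convex_convexHull ℝ B' (subset_convexHull ℝ B' h3) (subset_convexHull ℝ B' h4) hc hc' s'

def toR {P : Finset ℂ} (π : Finpartition P) : Setoid Ix where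
  r p q := p = q ∨ ∃ B ∈ π.parts, pt p ∈ B ∧ pt q ∈ B
  iseqv := ⟨fun _ => Or.inl rfl, by
    rintro p q (h | ⟨B, hB, h1, h2⟩)
    · exact Or.inl h.symm
    · exact Or.inr ⟨B, hB, h2, h1⟩, by
    rintro p q s (h | ⟨B, hB, h1, h2⟩) (h' | ⟨B', hB', h1', h2'⟩)
    · exact Or.inl (h.trans h')
    · subst h; exact Or.inr ⟨B', hB', h1', h2'⟩
    · subst h'; exact Or.inr ⟨B, hB, h1, h2⟩
    · have := π.eq_of_mem_parts hB hB' h2 h1'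
      subst this
      exact Or.inr ⟨B, hB, h1, h2'⟩⟩

lemma toR_iff {P : Finset ℂ} (π : Finpartition P) (p q : Ix) :
    toR π p q ↔ p = q ∨ ∃ B ∈ π.parts, pt p ∈ B ∧ pt q ∈ B := Iff.rfl

lemma toR_mem {m n : ℕ} {π : Finpartition (Uconfig m n)} (hπ : IsNoncrossing π) :
    toR π ∈ V (Nf m n) := by
  have hs : Supp (Nf m n) (toR π) := by
    intro p q h hne
    rcases h with h | ⟨B, hB, h1, h2⟩
    · exact absurd h hne
    · exact pt_mem.1 (π.le hB h1)
  refine ⟨?_, hs⟩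
  intro p p' q q' hp hq e e' l l'
  have hp_ : 1 ≤ p.2 ∧ p.2 ≤ Nf m n p.1 := by
    by_cases h : p = p'
    · subst h
      have hqq : q ≠ q' := by rintro rfl; omega
      have k1 := hs _ _ hq hqq
      have k2 := hs _ _ ((toR π).symm hq) hqq.symm
      rw [← e'] at k2
      omega
    · exact hs _ _ hp h
  have hq_ : 1 ≤ q.2 ∧ q.2 ≤ Nf m n q.1 := by
    by_cases h : q = q'
    · subst h
      have hqq : p ≠ p' := by rintro rfl; omega
      have k1 := hs _ _ hp hqq
      have k2 := hs _ _ ((toR π).symm hp) hqq.symm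
      rw [e] at k1
      omega
    · exact hs _ _ hq h
  have blk : ∀ s t : Ix, (1 ≤ s.2 ∧ s.2 ≤ Nf m n s.1) → toR π s t →
      ∃ B ∈ π.parts, pt s ∈ B ∧ pt t ∈ B := by
    intro s t hst h
    rcases h with h | h
    · subst h
      obtain ⟨B, hB, h⟩ := π.exists_mem (pt_mem.2 hst)
      exact ⟨B, hB, h, h⟩
    · exact h
  obtain ⟨B, hB, b1, b2⟩ := blk p p' hp_ hp
  obtain ⟨B', hB', b1', b2'⟩ := blk q q' hq_ hq
  by_cases hBB : B = B'
  · subst hBB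
    exact Or.inr ⟨B, hB, b1, b1'⟩
  · exact (cross e e' l l' (B := B) (B' := B') b1 b2 b1' b2' (hπ hB hB' hBB)).elim

lemma toR_sub {m n : ℕ} {π π' : Finpartition (Uconfig m n)} (h : toR π = toR π') :
    π.parts ⊆ π'.parts := by
  intro B hB
  obtain ⟨z, hz⟩ := π.nonempty_of_mem_parts hB
  have hzP := π.le hB hz
  obtain ⟨B', hB', hz'⟩ := π'.exists_mem hzP
  obtain ⟨p, hp, rfl⟩ := mem_U.1 hzP
  have : B = B' := by
    ext w
    constructor
    · intro hw
      obtain ⟨q, hq, rfl⟩ := mem_U.1 (π.le hB hw)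
      have : toR π p q := Or.inr ⟨B, hB, hz, hw⟩
      rw [h, toR_iff] at this
      rcases this with h | ⟨C, hC, c1, c2⟩
      · rw [← h]; exact hz'
      · rw [π'.eq_of_mem_parts hB' hC hz' c1]; exact c2
    · intro hw
      obtain ⟨q, hq, rfl⟩ := mem_U.1 (π'.le hB' hw)
      have : toR π' p q := Or.inr ⟨B', hB', hz', hw⟩
      rw [← h, toR_iff] at this
      rcases this with h | ⟨C, hC, c1, c2⟩
      · rw [← h]; exact hz
      · rw [π.eq_of_mem_parts hB hC hz c1]; exact c2
  rw [this]; exact hB'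

lemma toR_surj {m n : ℕ} {r : Setoid Ix} (hr : r ∈ V (Nf m n)) :
    ∃ π : Finpartition (Uconfig m n), IsNoncrossing π ∧ toR π = r := by
  classical
  let s : Setoid ℂ := r.comap co
  have hs : ∀ {p q : Ix}, 1 ≤ p.2 → 1 ≤ q.2 → (s (pt p) (pt q) ↔ r p q) := by
    intro p q hp hq
    change r (co (pt p)) (co (pt q)) ↔ _
    rw [co_pt hp, co_pt hq]
  let π := Finpartition.ofSetSetoid s (Uconfig m n)
  have hπ : ∀ B ∈ π.parts, ∃ p, (1 ≤ p.2 ∧ p.2 ≤ Nf m n p.1) ∧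
      ∀ q, pt q ∈ B ↔ (1 ≤ q.2 ∧ q.2 ≤ Nf m n q.1) ∧ r p q := by
    intro B hB
    simp only [π, Finpartition.ofSetSetoid, Finset.mem_image] at hB
    obtain ⟨a, ha, rfl⟩ := hB
    obtain ⟨p, hp, rfl⟩ := mem_U.1 ha
    refine ⟨p, hp, fun q => ?_⟩
    rw [Finset.mem_filter, pt_mem]
    constructor
    · rintro ⟨h1, h2⟩
      exact ⟨h1, (hs hp.1 h1.1).1 h2⟩
    · rintro ⟨h1, h2⟩
      exact ⟨h1, (hs hp.1 h1.1).2 h2⟩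
  refine ⟨π, ?_, ?_⟩
  · intro B hB B' hB' hne
    obtain ⟨x, hx, hx'⟩ := hπ B hB
    obtain ⟨y, hy, hy'⟩ := hπ B' hB'
    have hd : ∀ p q, pt p ∈ B → pt q ∈ B' → ¬ r p q := by
      intro p q hp hq h
      apply hne
      refine π.eq_of_mem_parts hB hB' hp ?_
      rw [hx'] at hp
      rw [hy'] at hq ⊢
      exact ⟨hp.1, r.trans hq.2 (r.symm h)⟩
    by_cases h : ∀ p q, pt p ∈ B → pt q ∈ B' → p.1 = q.1 → p.2 < q.2
    · exact sep (π.le hB) (π.le hB') h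
    · refine (sep (π.le hB') (π.le hB) ?_).symm
      push Not at h
      obtain ⟨p, q, hp, hq, e, l⟩ := h
      have hpq : p ≠ q := by rintro rfl; exact hd _ _ hp hq (r.refl _)
      have l1 : q.2 < p.2 := by
        rcases l.lt_or_eq with l | l
        · exact l
        · exact (hpq (Prod.ext e l.symm)).elim
      intro q' p' hq' hp' e'
      by_contra hlt
      have hpq' : p' ≠ q' := by rintro rfl; exact hd _ _ hp' hq' (r.refl _)
      have l2 : p'.2 < q'.2 := by
        rcases (not_lt.1 hlt).lt_or_eq with l | l
        · exact l
        · exact (hpq' (Prod.ext e'.symm l)).elim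
      apply hd p q hp hq
      refine hr.1 p p' q q' ?_ ?_ e e'.symm l1 l2
      · exact r.trans (r.symm ((hx' p).1 hp).2) ((hx' p').1 hp').2
      · exact r.trans (r.symm ((hy' q).1 hq).2) ((hy' q').1 hq').2
  · ext p q
    rw [toR_iff]
    constructor
    · rintro (h | ⟨B, hB, h1, h2⟩)
      · rw [h]
      · obtain ⟨x, hx, hx'⟩ := hπ B hB
        exact r.trans (r.symm ((hx' p).1 h1).2) ((hx' q).1 h2).2
    · intro h
      by_cases hpq : p = q
      · exact Or.inl hpq
      · right
        have k1 := hr.2 _ _ h hpq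
        have k2 := hr.2 _ _ (r.symm h) (Ne.symm hpq)
        obtain ⟨B, hB, hpB⟩ := π.exists_mem (pt_mem.2 k1)
        refine ⟨B, hB, hpB, ?_⟩
        obtain ⟨x, hx, hx'⟩ := hπ B hB
        rw [hx'] at hpB ⊢
        exact ⟨k2, r.trans hpB.2 h⟩

noncomputable def ncEquiv (m n : ℕ) : NC (Uconfig m n) ≃ V (Nf m n) :=
  Equiv.ofBijective (fun π => ⟨toR π.1, toR_mem π.2⟩) (by
    constructor
    · intro π π' h
      have h : toR π.1 = toR π'.1 := congrArg Subtype.val h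
      apply Subtype.ext
      apply Finpartition.ext
      exact Finset.Subset.antisymm (toR_sub h) (toR_sub h.symm)
    · rintro ⟨r, hr⟩
      obtain ⟨π, h1, h2⟩ := toR_surj hr
      exact ⟨⟨π, h1⟩, Subtype.ext h2⟩)

lemma V_finite (m n : ℕ) : (V (Nf m n)).Finite := by
  have : Finite (NC (Uconfig m n)) := inferInstance
  exact Set.finite_coe_iff.1 (Finite.of_equiv _ (ncEquiv m n))

noncomputable def u (m n : ℕ) : ℕ := (V (Nf m n)).ncard
noncomputable def sS (b : Bool) (m n : ℕ) : ℕ := (S b (Nf m n)).ncard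

lemma u_cast (m n : ℕ) : (u m n : ℕ∞) = (V (Nf m n)).encard := (V_finite m n).cast_ncard_eq
lemma s_cast (b : Bool) (m n : ℕ) : (sS b m n : ℕ∞) = (S b (Nf m n)).encard :=
  ((V_finite m n).subset (fun _ h => h.1)).cast_ncard_eq

lemma s_rec (m n : ℕ) : sS false (m + 1) n = u m n + sS false m n := by
  have := S_card (b := false) (N := Nf m n) (N' := Nf (m + 1) n) (by simp [Nf]) (by simp [Nf])
  rw [← s_cast, ← s_cast, ← u_cast] at this
  exact_mod_cast this

lemma t_rec (m n : ℕ) : sS true m (n + 1) = u m n + sS true m n := by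
  have := S_card (b := true) (N := Nf m n) (N' := Nf m (n + 1)) (by simp [Nf]) (by simp [Nf])
  rw [← s_cast, ← s_cast, ← u_cast] at this
  exact_mod_cast this

lemma u_eq (m n : ℕ) (h : 0 < m ∨ 0 < n) : u m n = sS false m n + sS true m n := by
  have := V_card (N := Nf m n) (by simpa [Nf] using h)
  rw [← s_cast, ← s_cast, ← u_cast] at this
  exact_mod_cast this

lemma s_zero (n : ℕ) : sS false 0 n = 0 := by
  have : S false (Nf 0 n) = ∅ := by
    ext r; simp [S, Nf]
  simp [sS, this]

lemma t_zero (m : ℕ) : sS true m 0 = 0 := by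
  have : S true (Nf m 0) = ∅ := by
    ext r; simp [S, Nf]
  simp [sS, this]

lemma u_zero : u 0 0 = 1 := by
  have : V (Nf 0 0) = {⊥} := by
    ext r
    simp only [Set.mem_singleton_iff]
    constructor
    · intro h
      rw [eq_bot_iff]
      intro p q hpq
      exact isolated h (by simp only [Nf]; simp; omega) hpq
    · rintro rfl
      constructor
      · intro p p' q q' hp hq e e' l l'
        have hp : p = p' := hp
        have hq : q = q' := hq
        subst hp hq
        omega
      · intro p q h hne
        exact absurd h hne
  simp [u, this]

lemma useq_eq (m n : ℕ) : useq m n = if m = 0 ∧ n = 0 then 0 else (u m n : ℤ) := by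
  unfold useq
  rw [Nat.card_congr (ncEquiv m n), Nat.card_coe_set_eq]
  rfl

lemma use00 : useq 0 0 = 0 := by simp [useq]

lemma use_m0 (m : ℕ) : useq (m + 1) 0 = 2 * useq m 0 + if m = 0 then 1 else 0 := by
  have h1 := s_rec m 0
  have h2 := u_eq (m + 1) 0 (by simp)
  have h3 := t_zero (m + 1)
  have h3' := t_zero m
  have h0 := u_zero
  have hs := s_zero 0
  rw [useq_eq, useq_eq]
  rcases Nat.eq_zero_or_pos m with rfl | hm
  · simp only [zero_add] at *
    simp; omega
  · have := u_eq m 0 (Or.inl hm)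
    have : m ≠ 0 := by omega
    simp [this]; omega

lemma use_0n (n : ℕ) : useq 0 (n + 1) = 2 * useq 0 n + if n = 0 then 1 else 0 := by
  have h1 := t_rec 0 n
  have h2 := u_eq 0 (n + 1) (by simp)
  have h3 := s_zero (n + 1)
  have h3' := s_zero n
  have h0 := u_zero
  have hs := t_zero 0
  rw [useq_eq, useq_eq]
  rcases Nat.eq_zero_or_pos n with rfl | hm
  · simp only [zero_add] at *
    simp; omega
  · have := u_eq 0 n (Or.inr hm)
    have : n ≠ 0 := by omega
    simp [this]; omega

lemma use_mn (m n : ℕ) : useq (m + 1) (n + 1) = 2 * useq m (n + 1) + 2 * useq (m + 1) n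
    - 3 * useq m n - if m = 0 ∧ n = 0 then 2 else 0 := by
  have h1 := s_rec m n
  have h2 := t_rec m n
  have h3 := s_rec m (n + 1)
  have h4 := t_rec (m + 1) n
  have k1 := u_eq (m + 1) n (by simp)
  have k2 := u_eq m (n + 1) (by simp)
  have k3 := u_eq (m + 1) (n + 1) (by simp)
  rw [useq_eq, useq_eq, useq_eq, useq_eq]
  by_cases h : m = 0 ∧ n = 0
  · obtain ⟨rfl, rfl⟩ := h
    have := u_zero
    have := s_zero 0
    have := t_zero 0
    simp only [zero_add] at *
    simp; omega
  · have := u_eq m n (by omega)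
    simp [h]; omega

end NCU

open MvPowerSeries in
lemma NCU.coeff_aux (f : MvPowerSeries (Fin 2) ℤ) (e d : Fin 2 →₀ ℕ) :
    coeff d (monomial e (1 : ℤ) * f) = if e ≤ d then coeff (d - e) f else 0 := by
  rw [coeff_monomial_mul]; simp

/-- `(1 - 2X - 2Y + 3XY) ⬝ U(X,Y) = X + Y - 2XY` in `ℤ⟦X,Y⟧`. -/
theorem nc_U_generating_function :
    (1 - 2 * MvPowerSeries.X 0 - 2 * MvPowerSeries.X 1 +
        3 * (MvPowerSeries.X 0 * MvPowerSeries.X 1)) * Useries =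
      MvPowerSeries.X 0 + MvPowerSeries.X 1 -
        2 * (MvPowerSeries.X 0 * MvPowerSeries.X 1) := by
  classical
  have hU : ∀ d, MvPowerSeries.coeff d Useries = useq (d 0) (d 1) := fun d => rfl
  have e1 : (1 - 2 * MvPowerSeries.X 0 - 2 * MvPowerSeries.X 1 +
        3 * (MvPowerSeries.X 0 * MvPowerSeries.X 1)) * Useries =
      Useries - (2 : ℤ) • (MvPowerSeries.X 0 * Useries) - (2 : ℤ) • (MvPowerSeries.X 1 * Useries)
        + (3 : ℤ) • (MvPowerSeries.X 0 * MvPowerSeries.X 1 * Useries) := by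
    simp only [zsmul_eq_mul]; push_cast; ring
  have e2 : MvPowerSeries.X 0 + MvPowerSeries.X 1 -
        2 * (MvPowerSeries.X 0 * MvPowerSeries.X 1) =
      MvPowerSeries.X 0 + MvPowerSeries.X 1 -
        (2 : ℤ) • (MvPowerSeries.X 0 * MvPowerSeries.X 1 : MvPowerSeries (Fin 2) ℤ) := by
    simp only [zsmul_eq_mul]; push_cast; ring
  rw [e1, e2]
  simp only [MvPowerSeries.X_def, MvPowerSeries.monomial_mul_monomial, mul_one]
  ext d
  simp only [map_add, map_sub, map_zsmul, NCU.coeff_aux, hU, MvPowerSeries.coeff_monomial]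
  simp only [Finsupp.le_def, Finsupp.ext_iff, Fin.forall_fin_two, Finsupp.tsub_apply,
    Finsupp.add_apply, Finsupp.single_apply]
  generalize d 0 = m
  generalize d 1 = n
  have h00 := NCU.use00
  rcases m with _ | m <;> rcases n with _ | n
  · simp [h00]
  · have := NCU.use_0n n
    simp [this]
  · have := NCU.use_m0 m
    simp [this]
  · have := NCU.use_mn m n
    simp [this]
    try ring
end

section
/- Let u_{m,n} = |NC(U_{m,n})| and v_{m,n} = |NC(V_{m,n})|. For all m ≥ 1 and n ≥ 1, v_{m,n} = u_{m,n} + v_{m−1,n} + v_{m,n−1} − v_{m−1,n−1}. -/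
open Finset

/-- The closed cone configuration `V_{m,n} = U_{m,n} ∪ {0}`. -/
noncomputable def Vconfig (m n : ℕ) : Finset ℂ := insert 0 (Uconfig m n)


/-- The tree order on `ℤ`: `c` lies between `0` and `a`. -/
def zle (c a : ℤ) : Prop := (0 ≤ c ∧ c ≤ a) ∨ (a ≤ c ∧ c ≤ 0)

/-- The embedding of `ℤ` onto the two half axes. -/
noncomputable def phi (t : ℤ) : ℂ := ⟨((max t 0 : ℤ) : ℝ), ((max (-t) 0 : ℤ) : ℝ)⟩

lemma phi_inj : Function.Injective phi := by
  intro s t h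
  have h1 := congrArg Complex.re h
  have h2 := congrArg Complex.im h
  simp only [phi] at h1 h2
  norm_cast at h1 h2
  omega

lemma phi_nonneg {t : ℤ} (h : 0 ≤ t) : phi t = ⟨(t : ℝ), 0⟩ := by
  apply Complex.ext
  · simp only [phi]; rw [max_eq_left h]
  · simp only [phi]; rw [max_eq_right (by omega)]; simp

lemma phi_nonpos {t : ℤ} (h : t ≤ 0) : phi t = ⟨0, -(t : ℝ)⟩ := by
  apply Complex.ext
  · simp only [phi]; rw [max_eq_right h]; simp
  · simp only [phi]; rw [max_eq_left (by omega)]; simp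

/-- Combinatorial noncrossing condition for an equivalence relation. -/
def NCr {X : Type} (le : X → X → Prop) (r : Setoid X) : Prop :=
  ∀ a a' c c', r a a' → r c c' → le c a → le a' c' → r a c

/-- Restricted tree order. -/
def sle (S : Finset ℤ) (a b : S) : Prop := zle a b

/-- Combinatorial noncrossing partitions. -/
abbrev CN (S : Finset ℤ) : Type := {r : Setoid S // NCr (sle S) r}

lemma seg_real (x y z : ℝ) (h1 : x ≤ y) (h2 : y ≤ z) :
    ∃ s t : ℝ, 0 ≤ s ∧ 0 ≤ t ∧ s + t = 1 ∧ s * x + t * z = y := by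
  have : y ∈ segment ℝ x z := by rw [segment_eq_Icc (h1.trans h2)]; exact ⟨h1, h2⟩
  obtain ⟨s, t, hs, ht, hst, h⟩ := this
  exact ⟨s, t, hs, ht, hst, by simpa using h⟩

lemma phi_seg {x y z : ℤ} (h1 : zle x y) (h2 : zle y z) :
    phi y ∈ segment ℝ (phi x) (phi z) := by
  rcases le_total 0 z with hz | hz
  · have hh : 0 ≤ x ∧ x ≤ y ∧ y ≤ z := by unfold zle at h1 h2; omega
    obtain ⟨hx, hxy, hyz⟩ := hh
    obtain ⟨s, t, hs, ht, hst, h⟩ := seg_real x y z (by exact_mod_cast hxy) (by exact_mod_cast hyz)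
    refine ⟨s, t, hs, ht, hst, ?_⟩
    rw [phi_nonneg hx, phi_nonneg hz, phi_nonneg (hx.trans hxy)]
    apply Complex.ext <;> simp [h]
  · have hh : x ≤ 0 ∧ y ≤ x ∧ z ≤ y := by unfold zle at h1 h2; omega
    obtain ⟨hx, hxy, hyz⟩ := hh
    obtain ⟨s, t, hs, ht, hst, h⟩ := seg_real (-x) (-y) (-z)
      (by simpa using hxy) (by simpa using hyz)
    refine ⟨s, t, hs, ht, hst, ?_⟩
    rw [phi_nonpos hx, phi_nonpos hz, phi_nonpos (hxy.trans hx)]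
    apply Complex.ext <;> simp
    linarith

lemma cross_real (a b c d : ℝ) (hc : 0 ≤ c) (hb : 0 ≤ b) (hca : c ≤ a) (hbd : b ≤ d) :
    ∃ s t : ℝ, 0 ≤ s ∧ s ≤ 1 ∧ 0 ≤ t ∧ t ≤ 1 ∧ (1 - s) * a = (1 - t) * c ∧ s * b = t * d := by
  have hD : 0 ≤ a * d - c * b := by nlinarith
  rcases hD.eq_or_lt with hD | hD
  · by_cases ha : a = 0
    · refine ⟨0, 0, by norm_num, by norm_num, by norm_num, by norm_num, ?_, by simp⟩
      linarith
    by_cases hd : d = 0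
    · refine ⟨1, 1, by norm_num, by norm_num, by norm_num, by norm_num, by simp, ?_⟩
      linarith
    have ha' : 0 < a := lt_of_le_of_ne (hc.trans hca) (Ne.symm ha)
    have hd' : 0 < d := lt_of_le_of_ne (hb.trans hbd) (Ne.symm hd)
    have e1 : a = c := by nlinarith
    refine ⟨0, 0, by norm_num, by norm_num, by norm_num, by norm_num, ?_, by simp⟩
    linarith
  · have hD' : a * d - c * b ≠ 0 := hD.ne'
    have h1 : 1 - d * (a - c) / (a * d - c * b) = c * (d - b) / (a * d - c * b) := by
      rw [eq_div_iff hD', sub_mul, div_mul_cancel₀ _ hD']; ring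
    have h2 : 1 - b * (a - c) / (a * d - c * b) = a * (d - b) / (a * d - c * b) := by
      rw [eq_div_iff hD', sub_mul, div_mul_cancel₀ _ hD']; ring
    have q1 : 0 ≤ c * (d - b) / (a * d - c * b) :=
      div_nonneg (mul_nonneg hc (by linarith)) hD.le
    have q2 : 0 ≤ a * (d - b) / (a * d - c * b) :=
      div_nonneg (mul_nonneg (by linarith) (by linarith)) hD.le
    refine ⟨d * (a - c) / (a * d - c * b), b * (a - c) / (a * d - c * b), ?_, ?_, ?_, ?_, ?_, ?_⟩
    · exact div_nonneg (mul_nonneg (by linarith) (by linarith)) hD.le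
    · linarith
    · exact div_nonneg (mul_nonneg (by linarith) (by linarith)) hD.le
    · linarith
    · rw [h1, h2]; ring
    · ring

lemma cross_mixed {A B : Set ℂ} {a a' c c' : ℤ} (ha : phi a ∈ A) (ha' : phi a' ∈ A)
    (hc : phi c ∈ B) (hc' : phi c' ∈ B) (h1 : 0 ≤ c) (h2 : c ≤ a) (h3 : a' ≤ 0) (h4 : c' ≤ a') :
    ¬ Disjoint (convexHull ℝ A) (convexHull ℝ B) := by
  obtain ⟨s, t, hs0, hs1, ht0, ht1, e1, e2⟩ := cross_real a (-a') c (-c')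
    (by exact_mod_cast h1) (by simpa using h3) (by exact_mod_cast h2) (by simpa using h4)
  have p1 : (1 - s) • phi a + s • phi a' ∈ convexHull ℝ A :=
    (convex_convexHull ℝ A) (subset_convexHull ℝ A ha) (subset_convexHull ℝ A ha')
      (by linarith) hs0 (by ring)
  have p2 : (1 - t) • phi c + t • phi c' ∈ convexHull ℝ B :=
    (convex_convexHull ℝ B) (subset_convexHull ℝ B hc) (subset_convexHull ℝ B hc')
      (by linarith) ht0 (by ring)
  have e : (1 - s) • phi a + s • phi a' = (1 - t) • phi c + t • phi c' := by
    rw [phi_nonneg (h1.trans h2), phi_nonneg h1, phi_nonpos h3, phi_nonpos (h4.trans h3)]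
    apply Complex.ext <;> simp
    · exact e1
    · linarith
  rw [Set.not_disjoint_iff]
  exact ⟨_, p1, e ▸ p2⟩

lemma cross_not_disjoint {A B : Set ℂ} {a a' c c' : ℤ} (ha : phi a ∈ A) (ha' : phi a' ∈ A)
    (hc : phi c ∈ B) (hc' : phi c' ∈ B) (h1 : zle c a) (h2 : zle a' c') :
    ¬ Disjoint (convexHull ℝ A) (convexHull ℝ B) := by
  have key : zle a' c ∨ zle c a' ∨ (0 ≤ c ∧ c ≤ a ∧ a' ≤ 0 ∧ c' ≤ a') ∨
      (0 ≤ a' ∧ a' ≤ c' ∧ c ≤ 0 ∧ a ≤ c) := by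
    unfold zle at *; omega
  rcases key with h | h | ⟨k1, k2, k3, k4⟩ | ⟨k1, k2, k3, k4⟩
  · rw [Set.not_disjoint_iff]
    exact ⟨phi c, segment_subset_convexHull ha' ha (phi_seg h h1), subset_convexHull ℝ B hc⟩
  · rw [Set.not_disjoint_iff]
    exact ⟨phi a', subset_convexHull ℝ A ha', segment_subset_convexHull hc hc' (phi_seg h h2)⟩
  · exact cross_mixed ha ha' hc hc' k1 k2 k3 k4
  · rw [disjoint_comm]
    exact cross_mixed hc' hc ha' ha k1 k2 k3 k4

lemma sep_disjoint {A B : Finset ℤ} (hA : A.Nonempty)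
    (h : ∀ a ∈ A, ∀ c ∈ B, ¬ zle c a) :
    Disjoint (convexHull ℝ (phi '' (A : Set ℤ))) (convexHull ℝ (phi '' (B : Set ℤ))) := by
  have key : ∀ σ : ℤ → ℤ, (σ = id ∨ σ = fun t => -t) →
      ∃ k : ℤ, 0 ≤ k ∧ (∀ a ∈ A, σ a ≤ k) ∧ ∀ c ∈ B, 0 ≤ σ c → k < σ c := by
    intro σ hσ
    refine ⟨((A.sup fun a => (σ a).toNat : ℕ) : ℤ), by positivity, ?_, ?_⟩
    · intro a ha
      have := Finset.le_sup (f := fun a => (σ a).toNat) ha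
      omega
    · intro c hc h0
      have hpos : 0 < σ c := by
        obtain ⟨a, ha⟩ := hA
        have := h a ha c hc
        unfold zle at this
        rcases hσ with rfl | rfl <;> simp only [id] at * <;> omega
      have : (A.sup fun a => (σ a).toNat) < (σ c).toNat := by
        rw [Finset.sup_lt_iff (by simp; omega)]
        intro a ha
        have := h a ha c hc
        unfold zle at this
        rcases hσ with rfl | rfl <;> simp only [id] at * <;> omega
      omega
  obtain ⟨k, hk0, hkA, hkB⟩ := key id (Or.inl rfl)
  obtain ⟨l, hl0, hlA, hlB⟩ := key (fun t => -t) (Or.inr rfl)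
  simp only [id] at hkA hkB
  let p : ℝ := k + 1 / 2
  let q : ℝ := l + 1 / 2
  have hp : 0 < p := by have : (0 : ℝ) ≤ k := by exact_mod_cast hk0
                        simp only [p]; linarith
  have hq : 0 < q := by have : (0 : ℝ) ≤ l := by exact_mod_cast hl0
                        simp only [q]; linarith
  let f : ℂ →ₗ[ℝ] ℝ := q • Complex.reLm + p • Complex.imLm
  have hf : ∀ z : ℂ, f z = q * z.re + p * z.im := fun z => by simp [f]
  have sA : convexHull ℝ (phi '' (A : Set ℤ)) ⊆ {z | f z < p * q} := by
    apply convexHull_min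
    · rintro _ ⟨a, ha, rfl⟩
      simp only [Set.mem_ofPred_eq, hf]
      rcases le_total 0 a with h0 | h0
      · rw [phi_nonneg h0]
        have : (a : ℝ) ≤ k := by exact_mod_cast hkA a ha
        have : (a : ℝ) < p := by simp only [p]; linarith
        simp only
        nlinarith
      · rw [phi_nonpos h0]
        have : -(a : ℝ) ≤ l := by exact_mod_cast hlA a ha
        have : -(a : ℝ) < q := by simp only [q]; linarith
        simp only
        nlinarith
    · exact convex_halfSpace_lt f.isLinear _
  have sB : convexHull ℝ (phi '' (B : Set ℤ)) ⊆ {z | p * q < f z} := by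
    apply convexHull_min
    · rintro _ ⟨a, ha, rfl⟩
      simp only [Set.mem_ofPred_eq, hf]
      rcases le_total 0 a with h0 | h0
      · rw [phi_nonneg h0]
        have : (k : ℝ) + 1 ≤ a := by exact_mod_cast hkB a ha h0
        have : p < a := by simp only [p]; linarith
        simp only
        nlinarith
      · rw [phi_nonpos h0]
        have : (l : ℝ) + 1 ≤ -a := by exact_mod_cast hlB a ha (by omega)
        have : q < -(a : ℝ) := by simp only [q]; linarith
        simp only
        nlinarith
    · exact convex_halfSpace_gt f.isLinear _
  rw [Set.disjoint_left]
  intro z h1 h2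
  have k1 : f z < p * q := sA h1
  have k2 : p * q < f z := sB h2
  exact lt_asymm k1 k2

/-- The setoid of a finpartition. -/
noncomputable def toSetoid {S : Finset ℤ} (π : Finpartition (S.image phi)) : Setoid S :=
  Setoid.ker fun x : S => π.part (phi x)

lemma toSetoid_iff {S : Finset ℤ} (π : Finpartition (S.image phi)) (x y : S) :
    toSetoid π x y ↔ π.part (phi x) = π.part (phi y) := Iff.rfl

lemma phi_mem {S : Finset ℤ} (x : S) : phi x ∈ S.image phi :=
  Finset.mem_image_of_mem _ x.2

lemma toSetoid_inj (S : Finset ℤ) :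
    Function.Injective (toSetoid (S := S)) := by
  intro π ρ h
  have hp : ∀ x : S, π.part (phi x) = ρ.part (phi x) := by
    intro x
    ext z
    constructor
    · intro hz
      obtain ⟨y, hy, rfl⟩ := Finset.mem_image.1 (π.part_subset _ hz)
      rw [π.mem_part_iff_part_eq_part (phi_mem ⟨y, hy⟩) (phi_mem x)] at hz
      have : toSetoid ρ ⟨y, hy⟩ x := h ▸ (show toSetoid π ⟨y, hy⟩ x from hz)
      exact (ρ.mem_part_iff_part_eq_part (phi_mem ⟨y, hy⟩) (phi_mem x)).2 this
    · intro hz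
      obtain ⟨y, hy, rfl⟩ := Finset.mem_image.1 (ρ.part_subset _ hz)
      rw [ρ.mem_part_iff_part_eq_part (phi_mem ⟨y, hy⟩) (phi_mem x)] at hz
      have : toSetoid π ⟨y, hy⟩ x := h ▸ (show toSetoid ρ ⟨y, hy⟩ x from hz)
      exact (π.mem_part_iff_part_eq_part (phi_mem ⟨y, hy⟩) (phi_mem x)).2 this
  apply Finpartition.ext
  ext B
  constructor
  · intro hB
    obtain ⟨z, hz, rfl⟩ := π.part_surjOn hB
    obtain ⟨y, hy, rfl⟩ := Finset.mem_image.1 hz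
    rw [hp ⟨y, hy⟩]
    exact ρ.part_mem.2 hz
  · intro hB
    obtain ⟨z, hz, rfl⟩ := ρ.part_surjOn hB
    obtain ⟨y, hy, rfl⟩ := Finset.mem_image.1 hz
    rw [← hp ⟨y, hy⟩]
    exact π.part_mem.2 hz

lemma toSetoid_surj (S : Finset ℤ) :
    Function.Surjective (toSetoid (S := S)) := by
  classical
  intro r
  let R : Setoid ℂ :=
    { r := fun z w => z = w ∨ ∃ x y : S, phi x = z ∧ phi y = w ∧ r x y
      iseqv := by
        refine ⟨fun z => Or.inl rfl, ?_, ?_⟩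
        · rintro z w (rfl | ⟨x, y, rfl, rfl, h⟩)
          · exact Or.inl rfl
          · exact Or.inr ⟨y, x, rfl, rfl, r.symm' h⟩
        · rintro z w v (rfl | ⟨x, y, rfl, rfl, h⟩) h2
          · exact h2
          · rcases h2 with rfl | ⟨x', y', hx, rfl, h'⟩
            · exact Or.inr ⟨x, y, rfl, rfl, h⟩
            · have : x' = y := Subtype.ext (phi_inj hx)
              subst this
              exact Or.inr ⟨x, y', rfl, rfl, r.trans' h h'⟩ }
  refine ⟨Finpartition.ofSetSetoid R (S.image phi), ?_⟩
  ext x y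
  rw [toSetoid_iff, ← Finpartition.mem_part_iff_part_eq_part _ (phi_mem x) (phi_mem y),
    Finpartition.mem_part_ofSetSetoid_iff_rel]
  constructor
  · rintro ⟨-, -, h | ⟨x', y', hx, hy, h⟩⟩
    · have : y = x := Subtype.ext (phi_inj h)
      subst this
      exact r.refl' _
    · have h1 : x' = y := Subtype.ext (phi_inj hx)
      have h2 : y' = x := Subtype.ext (phi_inj hy)
      subst h1 h2
      exact r.symm' h
  · intro h
    exact ⟨phi_mem y, phi_mem x, Or.inr ⟨y, x, rfl, rfl, r.symm' h⟩⟩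

lemma toSetoid_nc {S : Finset ℤ} (π : Finpartition (S.image phi)) :
    IsNoncrossing π ↔ NCr (sle S) (toSetoid π) := by
  classical
  constructor
  · intro h a a' c c' haa hcc h1 h2
    by_contra hne
    rw [toSetoid_iff] at haa hcc hne
    have := h (π.part_mem.2 (phi_mem a)) (π.part_mem.2 (phi_mem c)) hne
    refine cross_not_disjoint (a := a) (a' := a') (c := c) (c' := c') ?_ ?_ ?_ ?_ h1 h2 this
    · exact π.mem_part (phi_mem a)
    · rw [haa]; exact π.mem_part (phi_mem a')
    · exact π.mem_part (phi_mem c)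
    · rw [hcc]; exact π.mem_part (phi_mem c')
  · intro h B₁ hB₁ B₂ hB₂ hne
    have himg : ∀ B ∈ π.parts, ∃ A : Finset ℤ, A ⊆ S ∧ A.Nonempty ∧ B = A.image phi := by
      intro B hB
      obtain ⟨A, hA, rfl⟩ := Finset.subset_image_iff.1 (π.le hB)
      exact ⟨A, hA, Finset.image_nonempty.1 (π.nonempty_of_mem_parts hB), rfl⟩
    obtain ⟨A, hAS, hA, rfl⟩ := himg B₁ hB₁
    obtain ⟨C, hCS, hC, rfl⟩ := himg B₂ hB₂
    have pA : ∀ a ∈ A, π.part (phi a) = A.image phi := fun a ha =>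
      π.part_eq_of_mem hB₁ (Finset.mem_image_of_mem _ ha)
    have pC : ∀ a ∈ C, π.part (phi a) = C.image phi := fun a ha =>
      π.part_eq_of_mem hB₂ (Finset.mem_image_of_mem _ ha)
    rw [Finset.coe_image, Finset.coe_image]
    by_cases hs : ∀ a ∈ A, ∀ c ∈ C, ¬ zle c a
    · exact sep_disjoint hA hs
    · push Not at hs
      obtain ⟨a, ha, c, hc, hca⟩ := hs
      rw [disjoint_comm]
      apply sep_disjoint hC
      intro c' hc' a' ha' h2
      apply hne
      have := h ⟨a, hAS ha⟩ ⟨a', hAS ha'⟩ ⟨c, hCS hc⟩ ⟨c', hCS hc'⟩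
        ((pA a ha).trans (pA a' ha').symm) ((pC c hc).trans (pC c' hc').symm) hca h2
      rw [toSetoid_iff] at this
      exact (pA a ha).symm.trans (this.trans (pC c hc))

lemma card_NC_s13 (S : Finset ℤ) : Nat.card (NC (S.image phi)) = Nat.card (CN S) := by
  apply Nat.card_congr
  exact (Equiv.ofBijective _ ⟨toSetoid_inj S, toSetoid_surj S⟩).subtypeEquiv
    fun π => toSetoid_nc π

lemma Uconfig_eq (m n : ℕ) :
    Uconfig m n = ((Finset.Icc (-(n : ℤ)) m).erase 0).image phi := by
  ext z
  simp only [Uconfig, Finset.mem_union, Finset.mem_image, Finset.mem_Icc, Finset.mem_erase]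
  constructor
  · rintro (⟨j, hj, rfl⟩ | ⟨j, hj, rfl⟩)
    · refine ⟨j, by omega, ?_⟩
      rw [phi_nonneg (by omega)]
      apply Complex.ext <;> simp
    · refine ⟨-j, by omega, ?_⟩
      rw [phi_nonpos (by omega)]
      apply Complex.ext <;> simp
  · rintro ⟨t, ht, rfl⟩
    rcases le_total 0 t with h | h
    · left
      lift t to ℕ using h
      refine ⟨t, by omega, ?_⟩
      rw [phi_nonneg (by omega)]
      apply Complex.ext <;> simp
    · right
      obtain ⟨k, rfl⟩ : ∃ k : ℕ, t = -k := ⟨t.natAbs, by omega⟩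
      refine ⟨k, by omega, ?_⟩
      rw [phi_nonpos (by omega)]
      apply Complex.ext <;> simp

lemma Vconfig_eq (m n : ℕ) :
    Vconfig m n = (Finset.Icc (-(n : ℤ)) m).image phi := by
  have h0 : phi 0 = 0 := by rw [phi_nonneg le_rfl]; apply Complex.ext <;> simp
  rw [Vconfig, Uconfig_eq, ← h0, ← Finset.image_insert, Finset.insert_erase]
  simp

/-- Contraction along a monotone retraction. -/
lemma card_contract {S T : Finset ℤ} (s : S → T) (σ : T → S) (hs : ∀ a b, sle S a b → sle T (s a) (s b))
    (hσ : ∀ a b, sle T a b → sle S (σ a) (σ b)) (hid : ∀ x, s (σ x) = x)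
    (Q : Setoid S → Prop) (hQ : ∀ r : Setoid S, Q r ↔ ∀ x, r x (σ (s x))) :
    Nat.card {r : CN S // Q r.1} = Nat.card (CN T) := by
  symm
  apply Nat.card_eq_of_bijective (f := fun r : CN T =>
    (⟨⟨Setoid.comap s r.1, fun a a' c c' h1 h2 h3 h4 =>
      r.2 _ _ _ _ h1 h2 (hs _ _ h3) (hs _ _ h4)⟩, (hQ _).2 fun x => by
        rw [Setoid.comap_rel, hid]⟩ : {r : CN S // Q r.1}))
  constructor
  · intro r r' h
    have h' : Setoid.comap s r.1 = Setoid.comap s r'.1 := congrArg (fun q => q.1.1) h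
    apply Subtype.ext
    ext x y
    have := Setoid.ext_iff.1 h' (σ x) (σ y)
    simpa only [Setoid.comap_rel, hid] using this
  · rintro ⟨⟨r, hr⟩, hq⟩
    refine ⟨⟨Setoid.comap σ r, fun a a' c c' h1 h2 h3 h4 =>
      hr _ _ _ _ h1 h2 (hσ _ _ h3) (hσ _ _ h4)⟩, ?_⟩
    apply Subtype.ext
    apply Subtype.ext
    ext x y
    have hq' := (hQ r).1 hq
    simp only [Setoid.comap_rel]
    exact ⟨fun h => r.trans' (hq' x) (r.trans' h (r.symm' (hq' y))),
      fun h => r.trans' (r.symm' (hq' x)) (r.trans' h (hq' y))⟩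

/-- Partitions with `0` isolated. -/
lemma card_isolated {S : Finset ℤ} (h0 : (0 : ℤ) ∈ S) :
    Nat.card {r : CN S // ∀ x, r.1 ⟨0, h0⟩ x → x = ⟨0, h0⟩} = Nat.card (CN (S.erase 0)) := by
  let ι : S.erase 0 → S := fun x => ⟨x, Finset.mem_of_mem_erase x.2⟩
  have hι : Function.Injective ι := by
    intro x y h
    exact Subtype.ext (congrArg (fun q : S => (q : ℤ)) h)
  have hι0 : ∀ x, ι x ≠ ⟨0, h0⟩ := by
    intro x h
    exact Finset.ne_of_mem_erase x.2 (congrArg (fun q : S => (q : ℤ)) h)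
  have hιs : ∀ x : S, x ≠ ⟨0, h0⟩ → ∃ y, ι y = x := by
    intro x hx
    exact ⟨⟨x, Finset.mem_erase.2 ⟨fun h => hx (Subtype.ext h), x.2⟩⟩, rfl⟩
  apply Nat.card_eq_of_bijective (f := fun r : {r : CN S // ∀ x, r.1 ⟨0, h0⟩ x → x = ⟨0, h0⟩} =>
    (⟨Setoid.comap ι r.1.1, fun a a' c c' h1 h2 h3 h4 =>
      r.1.2 (ι a) (ι a') (ι c) (ι c') h1 h2 h3 h4⟩ : CN (S.erase 0)))
  constructor
  · rintro ⟨⟨r, hr⟩, hz⟩ ⟨⟨r', hr'⟩, hz'⟩ h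
    have h' : Setoid.comap ι r = Setoid.comap ι r' := congrArg (fun q => q.1) h
    apply Subtype.ext
    apply Subtype.ext
    simp only at hz hz' ⊢
    ext x y
    by_cases hx : x = ⟨0, h0⟩
    · subst hx
      constructor
      · intro h; rw [hz _ h]
      · intro h; rw [hz' _ h]
    by_cases hy : y = ⟨0, h0⟩
    · subst hy
      constructor
      · intro h; rw [hz _ (r.symm' h)]
      · intro h; rw [hz' _ (r'.symm' h)]
    obtain ⟨x, rfl⟩ := hιs x hx
    obtain ⟨y, rfl⟩ := hιs y hy
    exact Setoid.ext_iff.1 h' x y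
  · rintro ⟨r, hr⟩
    let R : Setoid S :=
      { r := fun z w => z = w ∨ ∃ x y, ι x = z ∧ ι y = w ∧ r x y
        iseqv := by
          refine ⟨fun z => Or.inl rfl, ?_, ?_⟩
          · rintro z w (rfl | ⟨x, y, rfl, rfl, h⟩)
            · exact Or.inl rfl
            · exact Or.inr ⟨y, x, rfl, rfl, r.symm' h⟩
          · rintro z w v (rfl | ⟨x, y, rfl, rfl, h⟩) h2
            · exact h2
            · rcases h2 with rfl | ⟨x', y', hx, rfl, h'⟩
              · exact Or.inr ⟨x, y, rfl, rfl, h⟩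
              · have : x' = y := hι hx
                subst this
                exact Or.inr ⟨x, y', rfl, rfl, r.trans' h h'⟩ }
    have hR : ∀ x y, R (ι x) (ι y) ↔ r x y := by
      intro x y
      constructor
      · rintro (h | ⟨x', y', hx, hy, h⟩)
        · rw [hι h]
        · rw [hι hx, hι hy] at h; exact h
      · intro h; exact Or.inr ⟨x, y, rfl, rfl, h⟩
    have hR0 : ∀ x, R ⟨0, h0⟩ x → x = ⟨0, h0⟩ := by
      rintro x (h | ⟨x', y', hx, hy, h⟩)
      · exact h.symm
      · exact absurd hx (hι0 _)
    have hle : ∀ x, sle S x ⟨0, h0⟩ → x = ⟨0, h0⟩ := by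
      intro x h
      apply Subtype.ext
      have h' : zle x 0 := h
      unfold zle at h'
      show (x : ℤ) = 0
      omega
    have hRn : NCr (sle S) R := by
      intro a a' c c' h1 h2 h3 h4
      by_cases ha : a = ⟨0, h0⟩
      · subst ha; rw [hle _ h3]
      by_cases hc' : c' = ⟨0, h0⟩
      · subst hc'
        have e := hle _ h4
        subst e
        exact absurd (hR0 _ (R.symm' h1)) ha
      by_cases ha' : a' = ⟨0, h0⟩
      · subst ha'
        exact absurd (hR0 _ (R.symm' h1)) ha
      by_cases hc : c = ⟨0, h0⟩
      · subst hc
        exact absurd (hR0 _ h2) hc'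
      obtain ⟨a, rfl⟩ := hιs a ha
      obtain ⟨a', rfl⟩ := hιs a' ha'
      obtain ⟨c, rfl⟩ := hιs c hc
      obtain ⟨c', rfl⟩ := hιs c' hc'
      rw [hR] at h1 h2 ⊢
      exact hr _ _ _ _ h1 h2 h3 h4
    refine ⟨⟨⟨R, hRn⟩, hR0⟩, ?_⟩
    apply Subtype.ext
    ext x y
    exact hR x y

lemma card_incl_excl {X : Type} [Finite X] (I A B : X → Prop) (h : ∀ x, ¬ I x ↔ (A x ∨ B x)) :
    (Nat.card X : ℤ) = Nat.card {x // I x} + Nat.card {x // A x} + Nat.card {x // B x}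
      - Nat.card {x // A x ∧ B x} := by
  classical
  have := Fintype.ofFinite X
  have h1 : Nat.card {x // I x} + Nat.card {x // A x ∨ B x} = Nat.card X := by
    simp only [← h]
    rw [← Nat.card_sum]
    exact Nat.card_congr (Equiv.sumCompl I)
  simp only [Nat.card_eq_fintype_card, Fintype.card_subtype] at h1 ⊢
  have h2 := Finset.card_union_add_card_inter (Finset.univ.filter fun x => A x)
    (Finset.univ.filter fun x => B x)
  rw [← Finset.filter_or, ← Finset.filter_and] at h2
  omega

/-- Contraction of `0` with its neighbours on the chosen half axes. -/
lemma card_shift (M N M' N' i j : ℤ) (hi : i = 0 ∨ i = 1) (hj : j = 0 ∨ j = 1)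
    (hM : M' + i = M) (hN : N' + j = N) (hM0 : 0 ≤ M') (hN0 : 0 ≤ N')
    (h0 : (0 : ℤ) ∈ Finset.Icc (-N) M) (Q : Setoid (Finset.Icc (-N) M) → Prop)
    (hQ : ∀ r, Q r ↔ ∀ x : Finset.Icc (-N) M,
      (((x : ℤ) = 1 ∧ i = 1) ∨ ((x : ℤ) = -1 ∧ j = 1)) → r ⟨0, h0⟩ x) :
    Nat.card {r : CN (Finset.Icc (-N) M) // Q r.1} = Nat.card (CN (Finset.Icc (-N') M')) := by
  let s₀ : ℤ → ℤ := fun t => if 0 < t then t - i else if t < 0 then t + j else 0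
  let σ₀ : ℤ → ℤ := fun t => if 0 < t then t + i else if t < 0 then t - j else 0
  have hs₀ : ∀ t, t ∈ Finset.Icc (-N) M → s₀ t ∈ Finset.Icc (-N') M' := by
    intro t ht
    rw [Finset.mem_Icc] at ht ⊢
    simp only [s₀]
    split_ifs <;> omega
  have hσ₀ : ∀ t, t ∈ Finset.Icc (-N') M' → σ₀ t ∈ Finset.Icc (-N) M := by
    intro t ht
    rw [Finset.mem_Icc] at ht ⊢
    simp only [σ₀]
    split_ifs <;> omega
  refine card_contract (fun x => ⟨s₀ x, hs₀ x x.2⟩) (fun x => ⟨σ₀ x, hσ₀ x x.2⟩) ?_ ?_ ?_ Q ?_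
  · rintro ⟨a, ha⟩ ⟨b, hb⟩ h
    simp only [sle, zle, s₀] at h ⊢
    split_ifs <;> omega
  · rintro ⟨a, ha⟩ ⟨b, hb⟩ h
    simp only [sle, zle, σ₀] at h ⊢
    split_ifs <;> omega
  · rintro ⟨a, ha⟩
    apply Subtype.ext
    simp only [s₀, σ₀]
    split_ifs <;> omega
  · intro r
    rw [hQ]
    constructor
    · intro h x
      by_cases hx : ((x : ℤ) = 1 ∧ i = 1) ∨ ((x : ℤ) = -1 ∧ j = 1)
      · have e : (⟨σ₀ (s₀ x), hσ₀ _ (hs₀ x x.2)⟩ : Finset.Icc (-N) M) = ⟨0, h0⟩ := by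
          apply Subtype.ext
          simp only [s₀, σ₀]
          split_ifs <;> omega
        simp only [e]
        exact r.symm' (h x hx)
      · have e : (⟨σ₀ (s₀ x), hσ₀ _ (hs₀ x x.2)⟩ : Finset.Icc (-N) M) = x := by
          apply Subtype.ext
          simp only [s₀, σ₀]
          split_ifs <;> omega
        simp only [e]
        exact r.refl' x
    · intro h x hx
      have e : (⟨σ₀ (s₀ x), hσ₀ _ (hs₀ x x.2)⟩ : Finset.Icc (-N) M) = ⟨0, h0⟩ := by
        apply Subtype.ext
        simp only [s₀, σ₀]
        split_ifs <;> omega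
      have := h x
      simp only [e] at this
      exact r.symm' this

/-- For `m, n ≥ 1`, `v_{m,n} = u_{m,n} + v_{m-1,n} + v_{m,n-1} - v_{m-1,n-1}`, where
`u_{m,n} = |NC(U_{m,n})|` and `v_{m,n} = |NC(V_{m,n})|`. -/
theorem nc_V_card_recursion (m n : ℕ) (hm : 1 ≤ m) (hn : 1 ≤ n) :
    (Nat.card (NC (Vconfig m n)) : ℤ) =
      (Nat.card (NC (Uconfig m n)) : ℤ) + (Nat.card (NC (Vconfig (m - 1) n)) : ℤ) +
        (Nat.card (NC (Vconfig m (n - 1))) : ℤ) -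
          (Nat.card (NC (Vconfig (m - 1) (n - 1))) : ℤ) := by

  obtain ⟨m, rfl⟩ : ∃ k, m = k + 1 := ⟨m - 1, by omega⟩
  obtain ⟨n, rfl⟩ : ∃ k, n = k + 1 := ⟨n - 1, by omega⟩
  simp only [Nat.add_sub_cancel]
  simp only [Vconfig_eq, Uconfig_eq, card_NC_s13]
  have h0 : (0 : ℤ) ∈ Finset.Icc (-((n + 1 : ℕ) : ℤ)) ((m + 1 : ℕ) : ℤ) := by
    rw [Finset.mem_Icc]; omega
  have hp : (1 : ℤ) ∈ Finset.Icc (-((n + 1 : ℕ) : ℤ)) ((m + 1 : ℕ) : ℤ) := by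
    rw [Finset.mem_Icc]; omega
  have hq : (-1 : ℤ) ∈ Finset.Icc (-((n + 1 : ℕ) : ℤ)) ((m + 1 : ℕ) : ℤ) := by
    rw [Finset.mem_Icc]; omega
  have ext1 : ∀ r : Setoid (Finset.Icc (-((n + 1 : ℕ) : ℤ)) ((m + 1 : ℕ) : ℤ)),
      r ⟨0, h0⟩ ⟨1, hp⟩ ↔ ∀ x : Finset.Icc (-((n + 1 : ℕ) : ℤ)) ((m + 1 : ℕ) : ℤ),
        (x : ℤ) = 1 → r ⟨0, h0⟩ x := by
    intro r
    constructor
    · rintro h ⟨x, hx⟩ e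
      simp only at e
      subst e
      exact h
    · intro h; exact h ⟨1, hp⟩ rfl
  have ext2 : ∀ r : Setoid (Finset.Icc (-((n + 1 : ℕ) : ℤ)) ((m + 1 : ℕ) : ℤ)),
      r ⟨0, h0⟩ ⟨-1, hq⟩ ↔ ∀ x : Finset.Icc (-((n + 1 : ℕ) : ℤ)) ((m + 1 : ℕ) : ℤ),
        (x : ℤ) = -1 → r ⟨0, h0⟩ x := by
    intro r
    constructor
    · rintro h ⟨x, hx⟩ e
      simp only at e
      subst e
      exact h
    · intro h; exact h ⟨-1, hq⟩ rfl
  rw [← card_isolated h0,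
    ← card_shift _ ((n + 1 : ℕ) : ℤ) (m : ℤ) ((n + 1 : ℕ) : ℤ) 1 0 (by simp) (by simp)
      (by push_cast; rfl) (by simp) (by positivity) (by positivity) h0
      (fun r => r ⟨0, h0⟩ ⟨1, hp⟩) (fun r => by rw [ext1]; simp),
    ← card_shift ((m + 1 : ℕ) : ℤ) _ ((m + 1 : ℕ) : ℤ) (n : ℤ) 0 1 (by simp) (by simp)
      (by simp) (by push_cast; rfl) (by positivity) (by positivity) h0
      (fun r => r ⟨0, h0⟩ ⟨-1, hq⟩) (fun r => by rw [ext2]; simp),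
    ← card_shift _ _ (m : ℤ) (n : ℤ) 1 1 (by simp) (by simp)
      (by push_cast; rfl) (by push_cast; rfl) (by positivity) (by positivity) h0
      (fun r => r ⟨0, h0⟩ ⟨1, hp⟩ ∧ r ⟨0, h0⟩ ⟨-1, hq⟩) (fun r => by
        rw [ext1, ext2, ← forall_and]
        refine forall_congr' fun x => ?_
        tauto)]
  have hfin : Finite (Setoid (Finset.Icc (-((n + 1 : ℕ) : ℤ)) ((m + 1 : ℕ) : ℤ))) :=
    Finite.of_injective (fun r => r.r) fun r r' h => Setoid.ext fun a b => by
      have := congrFun (congrFun h a) b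
      exact iff_of_eq this
  apply card_incl_excl
  rintro ⟨r, hr⟩
  constructor
  · intro h
    push Not at h
    obtain ⟨x, hx, hx0⟩ := h
    have hx0' : (x : ℤ) ≠ 0 := fun e => hx0 (Subtype.ext e)
    rcases lt_or_gt_of_ne hx0' with hlt | hgt
    · right
      refine r.trans' hx (hr x ⟨0, h0⟩ ⟨-1, hq⟩ ⟨-1, hq⟩ (r.symm' hx) (r.refl' _) ?_ ?_)
      · right; constructor <;> simp <;> omega
      · right; constructor <;> simp
    · left
      refine r.trans' hx (hr x ⟨0, h0⟩ ⟨1, hp⟩ ⟨1, hp⟩ (r.symm' hx) (r.refl' _) ?_ ?_)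
      · left; constructor <;> simp <;> omega
      · left; constructor <;> simp
  · rintro (h | h) hI
    · have := congrArg (fun q : Finset.Icc (-((n + 1 : ℕ) : ℤ)) ((m + 1 : ℕ) : ℤ) => (q : ℤ)) (hI _ h)
      simp at this
    · have := congrArg (fun q : Finset.Icc (-((n + 1 : ℕ) : ℤ)) ((m + 1 : ℕ) : ℤ) => (q : ℤ)) (hI _ h)
      simp at this
end

section
/- Let v_{m,n} = |NC(V_{m,n})|. In the ring of formal power series ℤ⟦X, Y⟧ in two variables, the generating function V(X,Y) = Σ_{m,n ≥ 0} v_{m,n} X^m Y^n satisfies (1 − 2X − 2Y + 3XY) · V(X,Y) = 1. -/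
open Finset

/-- The bivariate generating function `V(X,Y) = Σ v_{m,n} X^m Y^n` in `ℤ⟦X,Y⟧`, where
`v_{m,n} = |NC(V_{m,n})|`, the variable `X` is `MvPowerSeries.X 0` and `Y` is
`MvPowerSeries.X 1`. -/
noncomputable def Vseries : MvPowerSeries (Fin 2) ℤ :=
  fun d => (Nat.card (NC (Vconfig (d 0) (d 1))) : ℤ)


namespace NCV

/-- Combinatorial noncrossing condition; the integer `z ≥ 0` encodes the point `z` on the real
axis, and `z < 0` encodes `|z| i`. -/
def Good (r : Setoid ℤ) : Prop :=
  (∀ a b c, a ≤ b → b ≤ c → (0 ≤ a ∨ c ≤ 0) → r a c → r a b) ∧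
  (∀ a b c d, 0 ≤ a → a ≤ c → d ≤ 0 → b ≤ d → r a b → r c d → r a c)

def S (m n : ℕ) : Set (Setoid ℤ) :=
  {r | Good r ∧ ∀ a b, r a b → a ≠ b → -(n : ℤ) ≤ a ∧ a ≤ m}

def alone (r : Setoid ℤ) (x : ℤ) : Prop := ∀ y, r x y → y = x

def J (x y : ℤ) (r : Setoid ℤ) : Setoid ℤ := r.comap (fun z => if z = x then y else z)

lemma J_apply (x y : ℤ) (r : Setoid ℤ) (a b : ℤ) :
    J x y r a b ↔ r (if a = x then y else a) (if b = x then y else b) := Iff.rfl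

def isol (x : ℤ) (r : Setoid ℤ) : Setoid ℤ where
  r a b := a = b ∨ (a ≠ x ∧ b ≠ x ∧ r a b)
  iseqv := by
    refine ⟨fun a => Or.inl rfl, ?_, ?_⟩
    · rintro a b (h | ⟨h1, h2, h3⟩)
      · exact Or.inl h.symm
      · exact Or.inr ⟨h2, h1, r.symm' h3⟩
    · rintro a b c (rfl | ⟨h1, h2, h3⟩) (rfl | ⟨h4, h5, h6⟩)
      · exact Or.inl rfl
      · exact Or.inr ⟨h4, h5, h6⟩
      · exact Or.inr ⟨h1, h2, h3⟩
      · exact Or.inr ⟨h1, h5, r.trans' h3 h6⟩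

lemma isol_apply (x : ℤ) (r : Setoid ℤ) (a b : ℤ) :
    isol x r a b ↔ a = b ∨ (a ≠ x ∧ b ≠ x ∧ r a b) := Iff.rfl

lemma J_injOn {x y : ℤ} (hxy : x ≠ y) : Set.InjOn (J x y) {r | alone r x} := by
  intro r hr r' hr' h
  have key : ∀ a b, a ≠ x → b ≠ x → (r a b ↔ r' a b) := by
    intro a b ha hb
    have : J x y r a b ↔ J x y r' a b := by rw [h]
    simpa [J_apply, ha, hb] using this
  have one : ∀ (s : Setoid ℤ), alone s x → ∀ b, s x b ↔ b = x :=
    fun s hs b => ⟨hs b, fun h => h ▸ s.refl' _⟩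
  have two : ∀ (s : Setoid ℤ), alone s x → ∀ b, s b x ↔ b = x :=
    fun s hs b => ⟨fun h => hs b (s.symm' h), fun h => h ▸ s.refl' _⟩
  ext a b
  by_cases ha : a = x
  · subst ha; rw [one r hr, one r' hr']
  · by_cases hb : b = x
    · subst hb; rw [two r hr, two r' hr']
    · exact key a b ha hb

lemma J_surj {x y : ℤ} (hxy : x ≠ y) (r : Setoid ℤ) (h : r x y) :
    ∃ r', alone r' x ∧ J x y r' = r := by
  refine ⟨isol x r, ?_, ?_⟩
  · rintro b (h | ⟨h, _⟩)
    · exact h.symm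
    · exact absurd rfl h
  · ext a b
    rw [J_apply, isol_apply]
    have h1 := r.refl'
    have h2 := fun a b => @Setoid.symm' _ r a b
    have h3 := fun a b c => @Setoid.trans' _ r a b c
    grind

lemma ncard_J {x y : ℤ} (hxy : x ≠ y) (R : Setoid ℤ → Prop) :
    {r : Setoid ℤ | r x y ∧ R r}.ncard = {r | alone r x ∧ R (J x y r)}.ncard := by
  have hinj : Set.InjOn (J x y) {r | alone r x ∧ R (J x y r)} :=
    (J_injOn hxy).mono (fun r hr => hr.1)
  rw [← hinj.ncard_image]
  congr 1
  ext r
  constructor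
  · rintro ⟨h1, h2⟩
    obtain ⟨r', h3, rfl⟩ := J_surj hxy r h1
    exact ⟨r', ⟨h3, h2⟩, rfl⟩
  · rintro ⟨r', ⟨h3, h2⟩, rfl⟩
    refine ⟨?_, h2⟩
    rw [J_apply]; simp [hxy.symm]

lemma S_finite (m n : ℕ) : (S m n).Finite := by
  have hf : (Set.Icc (-(n : ℤ)) m ×ˢ Set.Icc (-(n : ℤ)) m).powerset.Finite :=
    ((Set.finite_Icc _ _).prod (Set.finite_Icc _ _)).powerset
  refine Set.Finite.of_finite_image (f := fun r => {p : ℤ × ℤ | r p.1 p.2 ∧ p.1 ≠ p.2})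
    (hf.subset ?_) ?_
  · rintro _ ⟨r, hr, rfl⟩ ⟨a, b⟩ ⟨h, hne⟩
    exact ⟨hr.2 a b h hne, hr.2 b a (r.symm' h) (Ne.symm hne)⟩
  · intro r _ r' _ h
    ext a b
    by_cases hab : a = b
    · subst hab; exact ⟨fun _ => r'.refl' _, fun _ => r.refl' _⟩
    · have := Set.ext_iff.1 h (a, b)
      simpa [hab] using this

def A (m : ℕ) (r : Setoid ℤ) : Prop := alone r (m + 1) ∨ r (m + 1) m
def B (n : ℕ) (r : Setoid ℤ) : Prop := alone r (-(n + 1)) ∨ r (-(n + 1)) (-n)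

lemma S_alone (m n : ℕ) (r : Setoid ℤ) :
    (r ∈ S (m + 1) n ∧ alone r (m + 1)) ↔ r ∈ S m n := by
  constructor
  · rintro ⟨⟨h1, h2⟩, h3⟩
    refine ⟨h1, fun a b hab hne => ?_⟩
    have := h2 a b hab hne
    have h4 : a ≠ m + 1 := by rintro rfl; exact hne (h3 b hab).symm
    push_cast at this
    omega
  · rintro ⟨h1, h2⟩
    refine ⟨⟨h1, fun a b hab hne => ?_⟩, fun y hy => ?_⟩
    · have := h2 a b hab hne
      push_cast; omega
    · by_contra hne
      have := h2 _ _ hy (Ne.symm hne)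
      omega

lemma isol_J {x y : ℤ} (hxy : x ≠ y) (r : Setoid ℤ) (h : alone r x) : isol x (J x y r) = r := by
  ext a b
  rw [isol_apply, J_apply]
  by_cases ha : a = x
  · subst ha
    simp only [ne_eq, not_true_eq_false, false_and, or_false]
    exact ⟨fun e => e ▸ r.refl' _, fun e => (h b e).symm⟩
  · by_cases hb : b = x
    · subst hb
      simp only [ne_eq, not_true_eq_false, false_and, and_false, or_false]
      exact ⟨fun e => e ▸ r.refl' _, fun e => h a (r.symm' e)⟩
    · simp only [ne_eq, ha, hb, not_false_eq_true, true_and, if_false]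
      exact ⟨fun e => e.elim (fun e => e ▸ r.refl' _) id, Or.inr⟩

lemma isol_good (x : ℤ) (s : Setoid ℤ) (h : Good s)
    (hx : (∀ a b, s a b → a ≠ b → a ≤ x) ∨ (∀ a b, s a b → a ≠ b → x ≤ a)) :
    Good (isol x s) := by
  obtain ⟨hc, hd⟩ := h
  refine ⟨fun a b c hab hbc h0 hr => ?_, fun a b c d h0 hac hd0 hbd hr hr' => ?_⟩
  · rw [isol_apply] at hr ⊢
    rcases hr with rfl | ⟨h1, h2, h3⟩
    · left; omega
    · by_cases hac : a = c
      · left; omega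
      refine Or.inr ⟨h1, ?_, hc a b c hab hbc h0 h3⟩
      rintro rfl
      rcases hx with hx | hx
      · have := hx c a (s.symm' h3) (Ne.symm hac)
        omega
      · have := hx a c h3 hac
        omega
  · rw [isol_apply] at hr hr' ⊢
    rcases hr with rfl | ⟨h1, h2, h3⟩
    · rcases hr' with rfl | ⟨h4, h5, h6⟩
      · left; omega
      · have e1 : a = 0 := by omega
        have e2 : d = 0 := by omega
        subst e1; subst e2
        exact Or.inr ⟨h5, h4, s.symm' h6⟩
    · rcases hr' with rfl | ⟨h4, h5, h6⟩
      · left; omega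
      · exact Or.inr ⟨h1, h4, hd a b c d h0 hac hd0 hbd h3 h6⟩

lemma S_J (m n : ℕ) (r : Setoid ℤ) (h : alone r (m + 1)) :
    J (m + 1) m r ∈ S (m + 1) n ↔ r ∈ S m n := by
  constructor
  · intro hS
    rw [← S_alone]
    refine ⟨?_, h⟩
    have e := isol_J (x := m + 1) (y := m) (by omega) r h
    obtain ⟨hg, hs⟩ := hS
    rw [← e]
    refine ⟨isol_good _ _ hg (Or.inl fun a b hab hne => ?_), fun a b hab hne => ?_⟩
    · have := (hs a b hab hne).2
      push_cast at this
      exact this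
    · rw [isol_apply] at hab
      rcases hab with hab | ⟨-, -, hab⟩
      · exact absurd hab hne
      · exact hs a b hab hne
  · rintro ⟨⟨hc, hx⟩, hs⟩
    refine ⟨⟨fun a b c hab hbc h0 hr => ?_, fun a b c d h0 hac hd hbd hr hr' => ?_⟩,
      fun a b hr hne => ?_⟩
    · rw [J_apply] at hr ⊢
      refine hc _ _ _ ?_ ?_ ?_ hr
      · split_ifs <;> omega
      · split_ifs <;> omega
      · split_ifs <;> omega
    · rw [J_apply] at hr hr' ⊢
      refine hx _ _ _ _ ?_ ?_ ?_ ?_ hr hr'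
      · split_ifs <;> omega
      · split_ifs <;> omega
      · split_ifs <;> omega
      · split_ifs <;> omega
    · rw [J_apply] at hr
      have := hs _ _ hr
      push_cast
      split_ifs at this <;> omega

lemma pair_fwd (m n : ℕ) (s : Setoid ℤ) (h : s ∈ S (m + 1) (n + 1)) (hA : ¬ A m s)
    (hB : ¬ B n s) (hqp : s (-(n + 1)) (m + 1)) : isol (-(n + 1)) s ∈ S m n := by
  obtain ⟨hg, hs⟩ := h
  push_cast at hs
  have hp : ∀ b, s (m + 1) b → b = m + 1 ∨ b = -(n + 1) := by
    intro b hb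
    by_contra! hne
    have hb1 := hs b _ (s.symm' hb) hne.1
    by_cases hb0 : 0 ≤ b
    · have := hg.1 b m (m + 1) (by omega) (by omega) (Or.inl hb0) (s.symm' hb)
      exact hA (Or.inr (s.trans' hb this))
    · have := hg.1 (-(n + 1)) (-n) b (by omega) (by omega) (Or.inr (by omega)) (s.trans' hqp hb)
      exact hB (Or.inr this)
  refine ⟨isol_good _ _ hg (Or.inr fun a b hab hne => (hs a b hab hne).1),
    fun a b hab hne => ?_⟩
  rw [isol_apply] at hab
  rcases hab with hab | ⟨h1, h2, hab⟩
  · exact absurd hab hne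
  · have := hs a b hab hne
    have h3 : a ≠ m + 1 := by
      rintro rfl
      have := hp b hab
      omega
    omega

lemma S_pair (m n : ℕ) (r : Setoid ℤ) (h : alone r (-(n + 1))) :
    (J (-(n + 1)) (m + 1) r ∈ S (m + 1) (n + 1) ∧ ¬ A m (J (-(n + 1)) (m + 1) r) ∧
      ¬ B n (J (-(n + 1)) (m + 1) r)) ↔ r ∈ S m n := by
  have hne : -((n : ℤ) + 1) ≠ m + 1 := by omega
  constructor
  · rintro ⟨h1, h2, h3⟩
    rw [← isol_J hne r h]
    apply pair_fwd m n _ h1 h2 h3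
    rw [J_apply, if_pos rfl, if_neg hne.symm]
  · rintro ⟨⟨hc, hx⟩, hs⟩
    have h5 : ∀ a b, r a b → a ≠ b → -(n : ℤ) ≤ a ∧ a ≤ m ∧ -(n : ℤ) ≤ b ∧ b ≤ m := by
      intro a b hab hne
      have h1 := hs a b hab hne
      have h2 := hs b a (r.symm' hab) hne.symm
      tauto
    refine ⟨⟨⟨fun a b c hab hbc h0 hr => ?_, fun a b c d h0 hac hd hbd hr hr' => ?_⟩,
      fun a b hr hne => ?_⟩, ?_, ?_⟩
    · by_cases hac : a = c
      · obtain rfl : a = b := by omega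
        exact Setoid.refl' _ _
      rw [J_apply] at hr ⊢
      have k := h5 _ _ hr
      have ha : a ≠ -(n + 1) := by rintro rfl; split_ifs at k <;> omega
      have hc' : c ≠ -(n + 1) := by rintro rfl; split_ifs at k <;> omega
      rw [if_neg ha, if_neg hc'] at hr k
      have hb : b ≠ -(n + 1) := by omega
      rw [if_neg ha, if_neg hb]
      exact hc a b c hab hbc h0 hr
    · rw [J_apply] at hr hr' ⊢
      have k := h5 _ _ hr
      have k' := h5 _ _ hr'
      have ha : a ≠ -(n + 1) := by omega
      have hc' : c ≠ -(n + 1) := by omega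
      rw [if_neg ha] at hr k ⊢
      rw [if_neg hc'] at hr' k' ⊢
      by_cases hac' : a = c
      · subst hac'; exact r.refl' _
      have hb : b ≠ -(n + 1) := by
        intro hb
        rw [if_pos hb] at k
        split_ifs at k' <;> omega
      rw [if_neg hb] at hr k
      have hd' : d ≠ -(n + 1) := by
        intro hd'
        omega
      rw [if_neg hd'] at hr'
      exact hx a b c d h0 hac hd hbd hr hr'
    · rw [J_apply] at hr
      have k := h5 _ _ hr
      push_cast
      split_ifs at k <;> omega
    · rintro (hA | hA)
      · have := hA (-(n + 1)) (by rw [J_apply, if_pos rfl, if_neg hne.symm])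
        omega
      · rw [J_apply, if_neg hne.symm, if_neg (by omega)] at hA
        have := h5 _ _ hA
        omega
    · rintro (hA | hA)
      · have := hA (m + 1) (by rw [J_apply, if_pos rfl, if_neg hne.symm])
        omega
      · rw [J_apply, if_pos rfl, if_neg (by omega)] at hA
        have := h5 _ _ hA
        omega

lemma pair_rel (m n : ℕ) (r : Setoid ℤ) (h : r ∈ S (m + 1) (n + 1)) (hA : ¬ A m r)
    (hB : ¬ B n r) : r (-(n + 1)) (m + 1) := by
  have h1 := r.refl'
  have h2 := fun a b => @Setoid.symm' _ r a b
  have h3 := fun a b c => @Setoid.trans' _ r a b c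
  obtain ⟨⟨hc, hx⟩, hs⟩ := h
  unfold A B alone at *
  push Not at hA hB
  obtain ⟨⟨z, hz, hzp⟩, hA⟩ := hA
  obtain ⟨⟨w, hw, hwq⟩, hB⟩ := hB
  have hz1 := hs z (m+1) (h2 _ _ hz) hzp
  have hw1 := hs w _ (h2 _ _ hw) hwq
  push_cast at hz1 hw1
  have hz0 : z < 0 := by
    by_contra h0
    have := hc z m (m+1)
    grind
  have hw0 : 0 < w := by
    by_contra h0
    have := hc (-(n+1)) (-n) w
    grind
  have := hx w (-(n+1)) (m+1) z
  grind

lemma step (m n : ℕ) (Q : Setoid ℤ → Prop)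
    (hQ : ∀ r, alone r (m + 1) → (Q (J (m + 1) m r) ↔ Q r)) :
    {r | r ∈ S (m + 1) n ∧ A m r ∧ Q r}.ncard = 2 * {r | r ∈ S m n ∧ Q r}.ncard := by
  have e : {r | r ∈ S (m + 1) n ∧ A m r ∧ Q r} =
      {r | r ∈ S m n ∧ Q r} ∪ {r | r (m + 1) m ∧ (r ∈ S (m + 1) n ∧ Q r)} := by
    ext r
    have := S_alone m n r
    simp only [Set.mem_ofPred_eq, Set.mem_union, A]
    tauto
  rw [e, Set.ncard_union_eq ?_ ((S_finite m n).subset fun r h => h.1)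
    ((S_finite (m+1) n).subset fun r h => h.2.1), ncard_J (by omega)]
  · rw [two_mul]
    congr 2
    ext r
    simp only [Set.mem_ofPred_eq]
    constructor
    · rintro ⟨h1, h2, h3⟩
      exact ⟨(S_J m n r h1).1 h2, (hQ r h1).1 h3⟩
    · rintro ⟨h1, h2⟩
      have h3 := ((S_alone m n r).2 h1).2
      exact ⟨h3, (S_J m n r h3).2 h1, (hQ r h3).2 h2⟩
  · rw [Set.disjoint_left]
    rintro r ⟨h1, -⟩ ⟨h2, -⟩
    have := ((S_alone m n r).2 h1).2 _ h2
    omega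

def mir (r : Setoid ℤ) : Setoid ℤ := r.comap (fun z => -z)

lemma mir_apply (r : Setoid ℤ) (a b : ℤ) : mir r a b ↔ r (-a) (-b) := Iff.rfl

lemma mir_mir (r : Setoid ℤ) : mir (mir r) = r := by
  ext a b; simp [mir_apply]

lemma mir_S' (m n : ℕ) (r : Setoid ℤ) (h : r ∈ S m n) : mir r ∈ S n m := by
  obtain ⟨⟨hc, hx⟩, hs⟩ := h
  have h2 := fun a b => @Setoid.symm' _ r a b
  have h3 := fun a b c => @Setoid.trans' _ r a b c
  refine ⟨⟨fun a b c hab hbc h0 hr => ?_, fun a b c d h0 hac hd hbd hr hr' => ?_⟩,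
      fun a b hr hne => ?_⟩
  · rw [mir_apply] at *
    have := hc (-c) (-b) (-a)
    grind
  · rw [mir_apply] at *
    have := hx (-d) (-c) (-b) (-a)
    grind
  · rw [mir_apply] at *
    have := hs (-a) (-b) hr
    grind

lemma mir_S (m n : ℕ) (r : Setoid ℤ) : mir r ∈ S n m ↔ r ∈ S m n :=
  ⟨fun h => by simpa [mir_mir] using mir_S' _ _ _ h, mir_S' _ _ _⟩

lemma mir_A (n : ℕ) (r : Setoid ℤ) : A n (mir r) ↔ B n r := by
  have : alone (mir r) (n + 1) ↔ alone r (-(n + 1)) := by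
    constructor
    · intro h y hy
      have := h (-y) (by simpa [mir_apply] using hy)
      omega
    · intro h y hy
      have := h (-y) hy
      omega
  simp [A, B, this, mir_apply]

lemma mir_inj : Function.Injective mir := Function.LeftInverse.injective mir_mir

lemma ncard_mir (R : Setoid ℤ → Prop) : {r | R (mir r)}.ncard = {r | R r}.ncard := by
  rw [← Set.ncard_image_of_injective _ mir_inj]
  congr 1
  ext r
  constructor
  · rintro ⟨r', h, rfl⟩; exact h
  · intro h; exact ⟨mir r, by simpa [mir_mir] using h, mir_mir r⟩

lemma card_symm (m n : ℕ) : (S m n).ncard = (S n m).ncard := by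
  have := ncard_mir (fun r => r ∈ S n m)
  simpa [mir_S] using this

lemma card_A (m n : ℕ) : {r | r ∈ S (m + 1) n ∧ A m r}.ncard = 2 * (S m n).ncard := by
  simpa using step m n (fun _ => True) (by simp)

lemma card_B (m n : ℕ) : {r | r ∈ S m (n + 1) ∧ B n r}.ncard = 2 * (S m n).ncard := by
  have := ncard_mir (fun r => r ∈ S (n + 1) m ∧ A n r)
  simp only [mir_S, mir_A] at this
  rw [this, card_A, card_symm]

lemma B_J (m n : ℕ) (r : Setoid ℤ) (h : alone r (m + 1)) :
    B n (J (m + 1) m r) ↔ B n r := by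
  have h1 := r.refl'
  have h2 := fun a b => @Setoid.symm' _ r a b
  have h3 := fun a b c => @Setoid.trans' _ r a b c
  unfold B alone
  unfold alone at h
  have h4 : ¬ (-((n:ℤ) + 1) = m + 1) := by omega
  have h5 : ¬ (-(n:ℤ) = m + 1) := by omega
  simp only [J_apply, h4, h5, if_false]
  have : (∀ y, r (-(n + 1)) (if y = (m:ℤ) + 1 then (m:ℤ) else y) → y = -(n + 1)) ↔
      (∀ y, r (-(n + 1)) y → y = -(n + 1)) := by
    constructor
    · intro H y hy
      have := H y
      grind
    · intro H y hy
      have := H _ hy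
      have := H (m + 1)
      grind
  rw [this]

lemma card_AB (m n : ℕ) :
    {r | r ∈ S (m + 1) (n + 1) ∧ A m r ∧ B n r}.ncard = 4 * (S m n).ncard := by
  rw [step m (n + 1) (B n) (fun r h => B_J m n r h), card_B]; ring

lemma card_pair (m n : ℕ) :
    {r | r ∈ S (m + 1) (n + 1) ∧ ¬ A m r ∧ ¬ B n r}.ncard = (S m n).ncard := by
  have e : {r | r ∈ S (m + 1) (n + 1) ∧ ¬ A m r ∧ ¬ B n r} = 
     {r | r (-(n + 1)) (m + 1) ∧ (r ∈ S (m + 1) (n + 1) ∧ ¬ A m r ∧ ¬ B n r)} := by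
    ext r
    simp only [Set.mem_ofPred_eq]
    exact ⟨fun h => ⟨pair_rel m n r h.1 h.2.1 h.2.2, h⟩, fun h => h.2⟩
  rw [e, ncard_J (by omega)]
  congr 1
  ext r
  simp only [Set.mem_ofPred_eq]
  constructor
  · rintro ⟨h, h'⟩; exact (S_pair m n r h).1 h'
  · intro h
    have ha : alone r (-(n + 1)) := by
      intro y hy
      by_contra hne
      have := h.2 _ _ hy (Ne.symm hne)
      omega
    exact ⟨ha, (S_pair m n r ha).2 h⟩

lemma ncard_split (P Q : Setoid ℤ → Prop) (hf : {r | P r}.Finite) :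
    {r | P r}.ncard = {r | P r ∧ Q r}.ncard + {r | P r ∧ ¬ Q r}.ncard :=
  (Set.ncard_inter_add_ncard_sdiff_eq_ncard {r | P r} {r | Q r} hf).symm

lemma recur (m n : ℕ) :
    (S (m + 1) (n + 1)).ncard + 3 * (S m n).ncard =
      2 * (S m (n + 1)).ncard + 2 * (S (m + 1) n).ncard := by
  have hf := S_finite (m + 1) (n + 1)
  have s1 := ncard_split (fun r => r ∈ S (m + 1) (n + 1)) (A m) hf
  have s2 := ncard_split (fun r => r ∈ S (m + 1) (n + 1) ∧ ¬ A m r) (B n)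
    (hf.subset fun r h => h.1)
  have s3 := ncard_split (fun r => r ∈ S (m + 1) (n + 1) ∧ B n r) (A m)
    (hf.subset fun r h => h.1)
  have c1 := card_A m (n + 1)
  have c2 := card_B (m + 1) n
  have c3 := card_AB m n
  have c4 := card_pair m n
  have e1 : {r | (r ∈ S (m + 1) (n + 1) ∧ B n r) ∧ A m r} =
      {r | r ∈ S (m + 1) (n + 1) ∧ A m r ∧ B n r} := by ext; simp; tauto
  have e2 : {r | (r ∈ S (m + 1) (n + 1) ∧ B n r) ∧ ¬ A m r} =
      {r | (r ∈ S (m + 1) (n + 1) ∧ ¬ A m r) ∧ B n r} := by ext; simp; tauto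
  have e3 : {r | (r ∈ S (m + 1) (n + 1) ∧ ¬ A m r) ∧ ¬ B n r} =
      {r | r ∈ S (m + 1) (n + 1) ∧ ¬ A m r ∧ ¬ B n r} := by ext; simp; tauto
  rw [e1, e2] at s3
  rw [e3] at s2
  simp only [Set.ofPred_mem_eq] at s1
  omega

lemma base0 : (S 0 0).ncard = 1 := by
  rw [Set.ncard_eq_one]
  refine ⟨⊥, ?_⟩
  ext r
  constructor
  · rintro ⟨-, h⟩
    have : r = ⊥ := by
      rw [eq_bot_iff]
      intro a b hab
      change a = b
      by_contra hne
      have h1 := h a b hab hne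
      have h2 := h b a (r.symm' hab) (Ne.symm hne)
      omega
    exact this
  · rintro rfl
    refine ⟨⟨fun a b c hab hbc h0 hr => ?_, fun a b c d h0 hac hd hbd hr hr' => ?_⟩,
      fun a b hr hne => absurd hr hne⟩
    · change a = c at hr
      change a = b
      omega
    · change a = b at hr
      change c = d at hr'
      change a = c
      omega

lemma base1 (m : ℕ) : (S (m + 1) 0).ncard = 2 * (S m 0).ncard := by
  rw [← card_A]
  congr 1
  ext r
  simp only [Set.mem_ofPred_eq, iff_self_and]
  rintro ⟨⟨hc, hx⟩, hs⟩
  by_contra hA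
  unfold A alone at hA
  push Not at hA
  obtain ⟨⟨y, hy, hne⟩, hA⟩ := hA
  have := hs y _ (r.symm' hy) hne
  push_cast at this
  apply hA
  have h5 := hc y m (m+1) (by omega) (by omega) (Or.inl (by omega)) (r.symm' hy)
  exact r.trans' hy h5

end NCV

namespace NCV

noncomputable def pt (z : ℤ) : ℂ := ⟨((max z 0 : ℤ) : ℝ), ((max (-z) 0 : ℤ) : ℝ)⟩

lemma pt_pos {z : ℤ} (h : 0 ≤ z) : pt z = ⟨(z : ℝ), 0⟩ := by
  simp only [pt, max_eq_left h, max_eq_right (by omega : -z ≤ 0), Int.cast_zero]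

lemma pt_neg {z : ℤ} (h : z ≤ 0) : pt z = ⟨0, -(z : ℝ)⟩ := by
  simp only [pt, max_eq_right h, max_eq_left (by omega : 0 ≤ -z), Int.cast_zero, Int.cast_neg]

lemma pt_inj : Function.Injective pt := by
  intro a b h
  simp only [pt, Complex.mk.injEq, Int.cast_inj] at h
  omega

lemma mem_V (m n : ℕ) (w : ℂ) :
    w ∈ Vconfig m n ↔ ∃ z : ℤ, -(n : ℤ) ≤ z ∧ z ≤ m ∧ w = pt z := by
  simp only [Vconfig, Uconfig, Finset.mem_insert, Finset.mem_union, Finset.mem_image,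
    Finset.mem_Icc]
  constructor
  · rintro (rfl | ⟨j, hj, rfl⟩ | ⟨k, hk, rfl⟩)
    · exact ⟨0, by omega, by omega, by rw [pt_pos le_rfl]; apply Complex.ext <;> simp⟩
    · exact ⟨j, by omega, by omega, by rw [pt_pos (by omega)]; apply Complex.ext <;> simp⟩
    · exact ⟨-k, by omega, by omega, by rw [pt_neg (by omega)]; apply Complex.ext <;> simp⟩
  · rintro ⟨z, h1, h2, rfl⟩
    rcases lt_trichotomy z 0 with h | rfl | h
    · obtain ⟨k, rfl⟩ : ∃ k : ℕ, z = -k := ⟨z.natAbs, by omega⟩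
      refine Or.inr (Or.inr ⟨k, by omega, ?_⟩)
      rw [pt_neg (by omega)]; apply Complex.ext <;> simp
    · left; rw [pt_pos le_rfl]; apply Complex.ext <;> simp
    · obtain ⟨k, rfl⟩ : ∃ k : ℕ, z = k := ⟨z.natAbs, by omega⟩
      refine Or.inr (Or.inl ⟨k, by omega, ?_⟩)
      rw [pt_pos (by omega)]; apply Complex.ext <;> simp

lemma pt_mem_V {m n : ℕ} {z : ℤ} : pt z ∈ Vconfig m n ↔ -(n : ℤ) ≤ z ∧ z ≤ m := by
  rw [mem_V]
  constructor
  · rintro ⟨z', h1, h2, h3⟩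
    rw [pt_inj h3]; exact ⟨h1, h2⟩
  · rintro ⟨h1, h2⟩; exact ⟨z, h1, h2, rfl⟩

lemma mem_hull {B : Set ℂ} {p q : ℂ} (hp : p ∈ B) (hq : q ∈ B) {t : ℝ} (h0 : 0 ≤ t)
    (h1 : t ≤ 1) (w : ℂ) (hre : w.re = (1 - t) * p.re + t * q.re)
    (him : w.im = (1 - t) * p.im + t * q.im) : w ∈ convexHull ℝ B := by
  apply segment_subset_convexHull hp hq
  refine ⟨1 - t, t, by linarith, h0, by ring, ?_⟩
  apply Complex.ext <;> simp [hre, him]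

lemma between {B : Set ℂ} {a b c : ℤ} (hab : a ≤ b) (hbc : b ≤ c) (h0 : 0 ≤ a ∨ c ≤ 0)
    (ha : pt a ∈ B) (hc : pt c ∈ B) : pt b ∈ convexHull ℝ B := by
  by_cases hac : a = c
  · obtain rfl : a = b := by omega
    exact subset_convexHull _ _ ha
  have h1 : (a : ℝ) ≤ b := by exact_mod_cast hab
  have h2 : (b : ℝ) ≤ c := by exact_mod_cast hbc
  have h3 : (0 : ℝ) < c - a := by
    have : (a : ℝ) < c := by exact_mod_cast (by omega : a < c)
    linarith
  have ht0 : 0 ≤ ((b : ℝ) - a) / (c - a) := div_nonneg (by linarith) h3.le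
  have ht1 : ((b : ℝ) - a) / (c - a) ≤ 1 := by rw [div_le_one h3]; linarith
  have key : (b : ℝ) = (1 - ((b : ℝ) - a) / (c - a)) * a + ((b : ℝ) - a) / (c - a) * c := by
    field_simp; ring
  refine mem_hull ha hc ht0 ht1 _ ?_ ?_
  · rcases h0 with h0 | h0
    · rw [pt_pos h0, pt_pos (by omega), pt_pos (by omega)]; exact key
    · rw [pt_neg h0, pt_neg (by omega), pt_neg (by omega)]; simp
  · rcases h0 with h0 | h0
    · rw [pt_pos h0, pt_pos (by omega), pt_pos (by omega)]; simp
    · rw [pt_neg h0, pt_neg (by omega), pt_neg (by omega)]; simp only; linarith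

lemma cross {B C : Set ℂ} {a b c d : ℤ} (h0 : 0 ≤ a) (hac : a < c) (hd : d ≤ 0) (hbd : b ≤ d)
    (hb : b < 0) (ha : pt a ∈ B) (hb' : pt b ∈ B) (hc : pt c ∈ C) (hd' : pt d ∈ C) :
    ¬ Disjoint (convexHull ℝ B) (convexHull ℝ C) := by
  have r0 : (0 : ℝ) ≤ a := by exact_mod_cast h0
  have r1 : (a : ℝ) < c := by exact_mod_cast hac
  have r2 : (d : ℝ) ≤ 0 := by exact_mod_cast hd
  have r3 : (b : ℝ) ≤ d := by exact_mod_cast hbd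
  have r4 : (b : ℝ) < 0 := by exact_mod_cast hb
  rw [pt_pos h0] at ha
  rw [pt_pos (by omega)] at hc
  rw [pt_neg hb.le] at hb'
  rw [pt_neg hd] at hd'
  generalize (a : ℝ) = a at *
  generalize (c : ℝ) = c at *
  obtain ⟨β, hβ⟩ : ∃ β : ℝ, β = -(b : ℝ) := ⟨_, rfl⟩
  obtain ⟨δ, hδ⟩ : ∃ δ : ℝ, δ = -(d : ℝ) := ⟨_, rfl⟩
  rw [← hβ] at hb'
  rw [← hδ] at hd'
  have p1 : 0 < β := by linarith
  have p2 : 0 ≤ δ := by linarith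
  have p3 : δ ≤ β := by linarith
  have hD : 0 < β * c - a * δ := by nlinarith
  rw [Set.not_disjoint_iff]
  refine ⟨⟨(1 - δ * (c - a) / (β * c - a * δ)) * a, δ * (c - a) / (β * c - a * δ) * β⟩,
    mem_hull (t := δ * (c - a) / (β * c - a * δ)) ha hb' ?_ ?_ _ ?_ ?_,
    mem_hull (t := β * (c - a) / (β * c - a * δ)) hc hd' ?_ ?_ _ ?_ ?_⟩
  · exact div_nonneg (mul_nonneg p2 (by linarith)) hD.le
  · rw [div_le_one hD]; nlinarith
  · simp
  · simp
  · exact div_nonneg (mul_nonneg p1.le (by linarith)) hD.le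
  · rw [div_le_one hD]; nlinarith
  · simp only
    have hD' : β * c - a * δ ≠ 0 := hD.ne'
    have e : 1 / (β * c - a * δ) * (β * c - a * δ) = 1 := one_div_mul_cancel hD'
    generalize hu : 1 / (β * c - a * δ) = u at e
    rw [div_eq_mul_one_div, div_eq_mul_one_div (β * (c - a)), hu]
    linear_combination (c - a) * e
  · simp only; ring

lemma thresh (P Q : ℤ → Prop) (m : ℤ) (hm : ∀ z, P z → z ≤ m)
    (h : ∀ x x', P x → Q x' → 0 ≤ x → 0 ≤ x' → x < x') (h0 : ¬ Q 0) :
    ∃ a : ℤ, 0 ≤ a ∧ (∀ x, P x → x ≤ a) ∧ (∀ x, Q x → 0 ≤ x → a < x) := by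
  by_cases hP : ∃ x, P x ∧ 0 ≤ x
  · obtain ⟨a, ⟨ha, ha0⟩, hmax⟩ := Int.exists_greatest_of_bdd (P := fun x => P x ∧ 0 ≤ x)
      ⟨m, fun z hz => hm z hz.1⟩ hP
    refine ⟨a, ha0, fun x hx => ?_, fun x hx hx0 => h a x ha hx ha0 hx0⟩
    by_cases hx0 : 0 ≤ x
    · exact hmax x ⟨hx, hx0⟩
    · omega
  · push Not at hP
    refine ⟨0, le_rfl, fun x hx => (hP x hx).le, fun x hx hx0 => ?_⟩
    rcases hx0.lt_or_eq with h1 | h1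
    · exact h1
    · subst h1; exact absurd hx h0

lemma linF (s t : ℝ) : IsLinearMap ℝ (fun w : ℂ => w.re * t + w.im * s) :=
  ⟨fun x y => by simp only [Complex.add_re, Complex.add_im]; ring,
    fun c x => by simp only [Complex.smul_re, Complex.smul_im, smul_eq_mul]; ring⟩

lemma sep {m n : ℕ} {B C : Set ℂ} (hB : ∀ w ∈ B, w ∈ Vconfig m n) (hC : ∀ w ∈ C, w ∈ Vconfig m n)
    (hne : B.Nonempty)
    (hx : ∀ x x', pt x ∈ B → pt x' ∈ C → 0 ≤ x → 0 ≤ x' → x < x')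
    (hy : ∀ y y', pt y ∈ B → pt y' ∈ C → y ≤ 0 → y' ≤ 0 → y' < y) :
    Disjoint (convexHull ℝ B) (convexHull ℝ C) := by
  have h0 : ¬ pt 0 ∈ C := by
    intro h
    obtain ⟨w, hw⟩ := hne
    obtain ⟨z, -, -, rfl⟩ := (mem_V m n w).1 (hB w hw)
    rcases le_total 0 z with hz | hz
    · have := hx z 0 hw h hz le_rfl; omega
    · have := hy z 0 hw h hz le_rfl; omega
  obtain ⟨a, ha0, ha1, ha2⟩ := thresh (fun z => pt z ∈ B) (fun z => pt z ∈ C) m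
    (fun z hz => (pt_mem_V.1 (hB _ hz)).2) hx h0
  obtain ⟨b, hb0, hb1, hb2⟩ := thresh (fun z => pt (-z) ∈ B) (fun z => pt (-z) ∈ C) n
    (fun z hz => by have := (pt_mem_V.1 (hB _ hz)).1; omega)
    (fun x x' h1 h2 h3 h4 => by have := hy _ _ h1 h2 (by omega) (by omega); omega) (by simpa using h0)
  have ra : (0 : ℝ) ≤ a := by exact_mod_cast ha0
  have rb : (0 : ℝ) ≤ b := by exact_mod_cast hb0
  set s : ℝ := a + 1 / 2 with hs
  set t : ℝ := b + 1 / 2 with ht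
  have h1 : convexHull ℝ B ⊆ {w | w.re * t + w.im * s < s * t} := by
    refine convexHull_min ?_ (convex_halfSpace_lt (linF s t) _)
    intro w hw
    obtain ⟨z, -, -, rfl⟩ := (mem_V m n w).1 (hB w hw)
    rcases le_total 0 z with hz | hz
    · have : (z : ℝ) ≤ a := by exact_mod_cast ha1 z hw
      rw [pt_pos hz]
      simp only [Set.mem_ofPred_eq]
      nlinarith
    · have : -(z : ℝ) ≤ b := by exact_mod_cast hb1 (-z) (by simpa using hw)
      rw [pt_neg hz]
      simp only [Set.mem_ofPred_eq]
      nlinarith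
  have h2 : convexHull ℝ C ⊆ {w | s * t < w.re * t + w.im * s} := by
    refine convexHull_min ?_ (convex_halfSpace_gt (linF s t) _)
    intro w hw
    obtain ⟨z, -, -, rfl⟩ := (mem_V m n w).1 (hC w hw)
    rcases le_total 0 z with hz | hz
    · have : (a : ℝ) + 1 ≤ z := by exact_mod_cast ha2 z hw hz
      rw [pt_pos hz]
      simp only [Set.mem_ofPred_eq]
      nlinarith
    · have : (b : ℝ) + 1 ≤ -z := by exact_mod_cast hb2 (-z) (by simpa using hw) (by omega)
      rw [pt_neg hz]
      simp only [Set.mem_ofPred_eq]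
      nlinarith
  rw [Set.disjoint_left]
  intro w hw hw'
  have e1 := h1 hw
  have e2 := h2 hw'
  simp only [Set.mem_ofPred_eq] at e1 e2
  linarith

/-- The equivalence relation on integers induced by a partition. -/
def rel {P : Finset ℂ} (π : Finpartition P) : Setoid ℤ where
  r a b := a = b ∨ ∃ B ∈ π.parts, pt a ∈ B ∧ pt b ∈ B
  iseqv := by
    refine ⟨fun a => Or.inl rfl, ?_, ?_⟩
    · rintro a b (h | ⟨B, h1, h2, h3⟩)
      · exact Or.inl h.symm
      · exact Or.inr ⟨B, h1, h3, h2⟩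
    · rintro a b c (rfl | ⟨B, h1, h2, h3⟩) h
      · exact h
      · rcases h with rfl | ⟨C, h4, h5, h6⟩
        · exact Or.inr ⟨B, h1, h2, h3⟩
        · obtain rfl := π.eq_of_mem_parts h1 h4 h3 h5
          exact Or.inr ⟨B, h1, h2, h6⟩

lemma rel_apply {P : Finset ℂ} (π : Finpartition P) (a b : ℤ) :
    rel π a b ↔ a = b ∨ ∃ B ∈ π.parts, pt a ∈ B ∧ pt b ∈ B := Iff.rfl

lemma good_of_nc {m n : ℕ} (π : Finpartition (Vconfig m n)) (h : IsNoncrossing π) :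
    Good (rel π) := by
  refine ⟨fun a b c hab hbc h0 hr => ?_, fun a b c d h0 hac hd hbd hr hr' => ?_⟩
  · rw [rel_apply] at hr ⊢
    rcases hr with rfl | ⟨B, hB, h1, h2⟩
    · left; omega
    · have r1 := pt_mem_V.1 (π.le hB h1)
      have r2 := pt_mem_V.1 (π.le hB h2)
      obtain ⟨C, hC, h3⟩ := π.exists_mem (pt_mem_V.2 ⟨by omega, by omega⟩ : pt b ∈ Vconfig m n)
      by_cases hBC : B = C
      · subst hBC; exact Or.inr ⟨B, hB, h1, h3⟩
      · exact absurd (subset_convexHull _ _ h3)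
          (Set.disjoint_left.1 (h hB hC hBC) (between hab hbc h0 h1 h2))
  · by_cases hac' : a = c
    · subst hac'; exact Setoid.refl' _ _
    by_cases hb : b = 0
    · obtain rfl : b = d := by omega
      exact Setoid.trans' _ hr (Setoid.symm' _ hr')
    rw [rel_apply] at hr hr' ⊢
    rcases hr with rfl | ⟨B, hB, h1, h2⟩
    · omega
    rcases hr' with rfl | ⟨C, hC, h3, h4⟩
    · omega
    by_cases hBC : B = C
    · subst hBC; exact Or.inr ⟨B, hB, h1, h3⟩
    · exact absurd (h hB hC hBC) (cross h0 (by omega) hd hbd (by omega) h1 h2 h3 h4)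

lemma nc_of_good {m n : ℕ} (π : Finpartition (Vconfig m n)) (h : Good (rel π)) :
    IsNoncrossing π := by
  intro B hB C hC hBC
  obtain ⟨hc, hx⟩ := h
  have hB1 : ∀ w ∈ (B : Set ℂ), w ∈ Vconfig m n := fun w hw => π.le hB hw
  have hC1 : ∀ w ∈ (C : Set ℂ), w ∈ Vconfig m n := fun w hw => π.le hC hw
  have hBr : ∀ a b, pt a ∈ B → pt b ∈ B → rel π a b := fun a b h1 h2 => Or.inr ⟨B, hB, h1, h2⟩
  have hCr : ∀ a b, pt a ∈ C → pt b ∈ C → rel π a b := fun a b h1 h2 => Or.inr ⟨C, hC, h1, h2⟩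
  have hBCr : ∀ a b, pt a ∈ B → pt b ∈ C → ¬ rel π a b := by
    rintro a b h1 h2 (rfl | ⟨D, hD, h3, h4⟩)
    · exact hBC (π.eq_of_mem_parts hB hC h1 h2)
    · exact hBC ((π.eq_of_mem_parts hB hD h1 h3).trans (π.eq_of_mem_parts hD hC h4 h2))
  have hCBr : ∀ a b, pt a ∈ C → pt b ∈ B → ¬ rel π a b :=
    fun a b h1 h2 h3 => hBCr b a h2 h1 (Setoid.symm' _ h3)
  have hlt : ∀ a b, pt a ∈ B → pt b ∈ C → a ≠ b := by
    rintro a b h1 h2 rfl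
    exact hBCr a a h1 h2 (Setoid.refl' _ _)
  by_cases H : (∀ x x', pt x ∈ B → pt x' ∈ C → 0 ≤ x → 0 ≤ x' → x < x') ∧
      (∀ y y', pt y ∈ B → pt y' ∈ C → y ≤ 0 → y' ≤ 0 → y' < y)
  · exact sep hB1 hC1 (π.nonempty_of_mem_parts hB) H.1 H.2
  by_cases H' : (∀ x x', pt x ∈ C → pt x' ∈ B → 0 ≤ x → 0 ≤ x' → x < x') ∧
      (∀ y y', pt y ∈ C → pt y' ∈ B → y ≤ 0 → y' ≤ 0 → y' < y)
  · exact (sep hC1 hB1 (π.nonempty_of_mem_parts hC) H'.1 H'.2).symm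
  exfalso
  rw [not_and_or] at H H'
  push Not at H H'
  rcases H with ⟨x, x', h1, h2, h3, h4, h5⟩ | ⟨x, x', h1, h2, h3, h4, h5⟩ <;>
  rcases H' with ⟨y', y, k1, k2, k3, k4, k5⟩ | ⟨y', y, k1, k2, k3, k4, k5⟩
  · have := hlt _ _ h1 h2
    have := hlt _ _ k2 k1
    rcases le_total x' y with h | h
    · exact hCBr _ _ h2 k2 (hc x' y y' h (by omega) (Or.inl h4) (hCr _ _ h2 k1))
    · exact hBCr _ _ k2 h2 (hc y x' x h (by omega) (Or.inl k4) (hBr _ _ k2 h1))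
  · exact hCBr _ _ h2 h1 (hx x' y' x y h4 (by omega) (by omega) (by omega) (hCr _ _ h2 k1)
      (hBr _ _ h1 k2))
  · exact hBCr _ _ k2 k1 (hx y x y' x' k4 (by omega) (by omega) (by omega) (hBr _ _ k2 h1)
      (hCr _ _ k1 h2))
  · have := hlt _ _ h1 h2
    have := hlt _ _ k2 k1
    rcases le_total x y' with h | h
    · exact hBCr _ _ h1 k1 (hc x y' y h (by omega) (Or.inr (by omega)) (hBr _ _ h1 k2))
    · exact hCBr _ _ k1 h1 (hc y' x x' h (by omega) (Or.inr (by omega)) (hCr _ _ k1 h2))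

lemma rel_mem_S {m n : ℕ} (π : NC (Vconfig m n)) : rel π.1 ∈ S m n := by
  refine ⟨good_of_nc π.1 π.2, ?_⟩
  rintro a b (h | ⟨B, hB, h1, h2⟩) hne
  · exact absurd h hne
  · exact pt_mem_V.1 (π.1.le hB h1)

lemma rel_mem_part {m n : ℕ} (π : Finpartition (Vconfig m n)) {a b : ℤ}
    (ha : pt a ∈ Vconfig m n) : pt b ∈ π.part (pt a) ↔ rel π a b := by
  rw [π.mem_part_iff_exists, rel_apply]
  constructor
  · rintro ⟨B, hB, h1, h2⟩; exact Or.inr ⟨B, hB, h2, h1⟩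
  · rintro (rfl | ⟨B, hB, h1, h2⟩)
    · obtain ⟨C, hC, h⟩ := π.exists_mem ha
      exact ⟨C, hC, h, h⟩
    · exact ⟨B, hB, h2, h1⟩

lemma rel_inj {m n : ℕ} (π μ : Finpartition (Vconfig m n)) (h : rel π = rel μ) : π = μ := by
  have key : ∀ (π μ : Finpartition (Vconfig m n)), rel π = rel μ → π.parts ⊆ μ.parts := by
    intro π μ h B hB
    obtain ⟨w, hw⟩ := π.nonempty_of_mem_parts hB
    have hwV := π.le hB hw
    obtain ⟨a, -, -, rfl⟩ := (mem_V m n w).1 hwV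
    have : B = μ.part (pt a) := by
      rw [← π.part_eq_of_mem hB hw]
      ext v
      constructor
      · intro hv
        obtain ⟨b, -, -, rfl⟩ := (mem_V m n v).1 (π.part_subset _ hv)
        rw [rel_mem_part _ hwV] at hv ⊢
        rwa [← h]
      · intro hv
        obtain ⟨b, -, -, rfl⟩ := (mem_V m n v).1 (μ.part_subset _ hv)
        rw [rel_mem_part _ hwV] at hv ⊢
        rwa [h]
    rw [this]
    exact μ.part_mem.2 hwV
  ext1
  exact (key π μ h).antisymm (key μ π h.symm)

open Classical in
lemma rel_surj {m n : ℕ} (r : Setoid ℤ) (hr : r ∈ S m n) :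
    ∃ π : Finpartition (Vconfig m n), rel π = r := by
  have hinv : ∀ z, Function.invFun pt (pt z) = z := Function.leftInverse_invFun pt_inj
  refine ⟨Finpartition.ofSetSetoid (r.comap (Function.invFun pt)) (Vconfig m n), ?_⟩
  ext a b
  by_cases ha : pt a ∈ Vconfig m n
  · rw [← rel_mem_part _ ha, Finpartition.mem_part_ofSetSetoid_iff_rel, Setoid.comap_rel,
      hinv, hinv]
    refine ⟨fun h => h.2.2, fun h => ⟨ha, ?_, h⟩⟩
    by_cases hab : a = b
    · subst hab; exact ha
    · exact pt_mem_V.2 (hr.2 b a (r.symm' h) (Ne.symm hab))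
  · rw [rel_apply]
    constructor
    · rintro (rfl | ⟨B, hB, h1, h2⟩)
      · exact r.refl' _
      · exact absurd (Finpartition.le _ hB h1) ha
    · intro h
      left
      by_contra hne
      exact ha (pt_mem_V.2 (hr.2 a b h hne))

lemma card_eq (m n : ℕ) : Nat.card (NC (Vconfig m n)) = (S m n).ncard := by
  rw [← Nat.card_coe_set_eq]
  refine Nat.card_congr (Equiv.ofBijective (fun π => ⟨rel π.1, rel_mem_S π⟩) ⟨?_, ?_⟩)
  · intro π μ h
    exact Subtype.ext (rel_inj _ _ (congrArg Subtype.val h))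
  · rintro ⟨r, hr⟩
    obtain ⟨π, hπ⟩ := rel_surj r hr
    exact ⟨⟨π, nc_of_good π (hπ ▸ hr.1)⟩, Subtype.ext hπ⟩

end NCV

open MvPowerSeries in
/-- `(1 - 2X - 2Y + 3XY) ⬝ V(X,Y) = 1` in `ℤ⟦X,Y⟧`. -/
theorem nc_V_generating_function :
    (1 - 2 * MvPowerSeries.X 0 - 2 * MvPowerSeries.X 1 +
        3 * (MvPowerSeries.X 0 * MvPowerSeries.X 1)) * Vseries = 1 := by
  have hc : ∀ d : Fin 2 →₀ ℕ, coeff d Vseries = ((NCV.S (d 0) (d 1)).ncard : ℤ) := by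
    intro d
    rw [← NCV.card_eq]
    rfl
  have e : (1 - 2 * MvPowerSeries.X 0 - 2 * MvPowerSeries.X 1 +
        3 * (MvPowerSeries.X 0 * MvPowerSeries.X 1)) * Vseries =
      Vseries - monomial (Finsupp.single 0 1) (2 : ℤ) * Vseries
        - monomial (Finsupp.single 1 1) (2 : ℤ) * Vseries
        + monomial (Finsupp.single 0 1 + Finsupp.single 1 1) (3 : ℤ) * Vseries := by
    have h2 : ∀ i : Fin 2, monomial (Finsupp.single i 1) (2 : ℤ) = 2 * MvPowerSeries.X i := by
      intro i
      rw [MvPowerSeries.X_def, two_mul, ← map_add]; norm_num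
    have h3 : monomial (Finsupp.single (0 : Fin 2) 1 + Finsupp.single 1 1) (3 : ℤ) =
        3 * (MvPowerSeries.X 0 * MvPowerSeries.X 1) := by
      rw [MvPowerSeries.X_def, MvPowerSeries.X_def, monomial_mul_monomial,
        show (3 : MvPowerSeries (Fin 2) ℤ) = 1 + 1 + 1 by norm_num, add_mul, add_mul, one_mul,
        ← map_add, ← map_add]
      norm_num
    rw [h2, h2, h3]; ring
  rw [e]
  ext d
  simp only [map_add, map_sub, coeff_monomial_mul, coeff_one, hc]
  have l0 : Finsupp.single (0 : Fin 2) 1 ≤ d ↔ 1 ≤ d 0 := by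
    simp [Finsupp.le_def, Fin.forall_fin_two]
  have l1 : Finsupp.single (1 : Fin 2) 1 ≤ d ↔ 1 ≤ d 1 := by
    simp [Finsupp.le_def, Fin.forall_fin_two]
  have l2 : Finsupp.single (0 : Fin 2) 1 + Finsupp.single (1 : Fin 2) 1 ≤ d ↔
      1 ≤ d 0 ∧ 1 ≤ d 1 := by
    simp [Finsupp.le_def, Fin.forall_fin_two]
  have l3 : d = 0 ↔ d 0 = 0 ∧ d 1 = 0 := by
    simp [Finsupp.ext_iff, Fin.forall_fin_two]
  simp only [l0, l1, l2, l3]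
  simp only [Finsupp.coe_tsub, Finsupp.coe_add, Pi.sub_apply, Pi.add_apply,
    Finsupp.single_eq_same, Finsupp.single_apply]
  generalize d 0 = m
  generalize d 1 = n
  rcases m with _ | m <;> rcases n with _ | n
  · simp [NCV.base0]
  · have := NCV.base1 n
    rw [NCV.card_symm, NCV.card_symm n] at this
    simp [this]
  · have := NCV.base1 m
    simp [this]
  · have := NCV.recur m n
    simp
    zify at this
    linarith
end
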